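/- Let (A,Λ) be any associative form ring, let (I,Γ) and (J,Δ) be two form ideals of (A,Λ), and let n ≥ 3. Then the mixed commutator subgroup [FU(2n,I,Γ), FU(2n,J,Δ)] is a normal subgroup of EU(2n,A,Λ), and moreover [FU(2n,I,Γ), FU(2n,J,Δ)] = [EU(2n,I,Γ), EU(2n,J,Δ)]. -/

import Mathlib

open Matrix
open scoped commutatorElement

/-- Bak's form ring data on a ring `A`: an involution `bar`, a central symmetry
`λ` with `λ λ̄ = 1`, and a form parameter `Λ`. -/
structure FormRingData (A : Type*) [Ring A] where
  bar : A →+ A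
  bar_mul : ∀ a b : A, bar (a * b) = bar b * bar a
  bar_bar : ∀ a : A, bar (bar a) = a
  lam : A
  lam_comm : ∀ a : A, lam * a = a * lam
  lam_bar : lam * bar lam = 1
  Lambda : AddSubgroup A
  lambdaMin_mem : ∀ c : A, c - lam * bar c ∈ Lambda
  lambdaMax_mem : ∀ x ∈ Lambda, x = -(lam * bar x)
  lambda_conj : ∀ (c : A), ∀ x ∈ Lambda, c * x * bar c ∈ Lambda

namespace FormRingData

variable {A : Type*} [Ring A]

/-- Integral powers of the symmetry `λ`; negative powers use `λ̄ = λ⁻¹`. -/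
def lpow (D : FormRingData A) (k : ℤ) : A :=
  if 0 ≤ k then D.lam ^ k.toNat else (D.bar D.lam) ^ (-k).toNat

end FormRingData

/-- The index set `Ω = {1,…,n,−n,…,−1}`, coded as `Fin n × Bool`
(second component `true` = positive index). -/
abbrev Idx (n : ℕ) := Fin n × Bool

namespace Idx

/-- The involution `i ↦ −i` on indices. -/
def neg {n : ℕ} (i : Idx n) : Idx n := (i.1, !i.2)

/-- The sign `ε(i) ∈ {±1}`. -/
def eps {n : ℕ} (i : Idx n) : ℤ := if i.2 then 1 else -1

theorem neg_ne {n : ℕ} (i : Idx n) : neg i ≠ i := by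
  simp [neg, Prod.ext_iff]

theorem neg_injective {n : ℕ} : Function.Injective (neg (n := n)) := by
  intro i j h
  simp only [neg, Prod.mk.injEq] at h
  refine Prod.ext h.1 ?_
  have h2 := h.2
  cases hi : i.2 <;> cases hj : j.2 <;> simp_all

theorem neg_neg {n : ℕ} (i : Idx n) : neg (neg i) = i := by
  simp [neg]

end Idx

/-- `GL(2n, A)`, realised as the units of the `Ω × Ω` matrix ring over `A`. -/
abbrev GLn (A : Type*) [Ring A] (n : ℕ) := (Matrix (Idx n) (Idx n) A)ˣ

section aux

theorem one_add_mul_one_sub {R : Type*} [Ring R] {X : R} (h : X * X = 0) :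
    (1 + X) * (1 - X) = 1 := by
  have hh : (1 + X) * (1 - X) = 1 - X * X := by noncomm_ring
  rw [hh, h, sub_zero]

theorem one_sub_mul_one_add {R : Type*} [Ring R] {X : R} (h : X * X = 0) :
    (1 - X) * (1 + X) = 1 := by
  have hh : (1 - X) * (1 + X) = 1 - X * X := by noncomm_ring
  rw [hh, h, sub_zero]

theorem stdBasisMatrix_neg' {A : Type*} [Ring A] {n : ℕ} (i j : Idx n) (c : A) :
    Matrix.single i j (-c) = -Matrix.single i j c := by
  refine eq_neg_of_add_eq_zero_left ?_
  rw [← Matrix.single_add]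
  simp

end aux

namespace FormRingData

variable {A : Type*} [Ring A] {n : ℕ}

/-- The off-diagonal part of a short root element. -/
def Xmat (D : FormRingData A) (i j : Idx n) (c : A) : Matrix (Idx n) (Idx n) A :=
  Matrix.single i j c -
    Matrix.single (Idx.neg j) (Idx.neg i) (D.lpow ((Idx.eps j - Idx.eps i) / 2) * D.bar c)

theorem Xmat_mul (D : FormRingData A) {i j : Idx n} (hij : i ≠ j) (c c' : A) :
    D.Xmat i j c * D.Xmat i j c' = 0 := by
  unfold Xmat
  rw [sub_mul, mul_sub, mul_sub,
    Matrix.single_mul_single_of_ne _ _ _ _ (Ne.symm hij),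
    Matrix.single_mul_single_of_ne _ _ _ _ (Ne.symm (Idx.neg_ne j)),
    Matrix.single_mul_single_of_ne _ _ _ _ (Idx.neg_ne i),
    Matrix.single_mul_single_of_ne _ _ _ _ (fun h => hij (Idx.neg_injective h))]
  simp

theorem Xmat_neg (D : FormRingData A) (i j : Idx n) (c : A) :
    D.Xmat i j (-c) = -D.Xmat i j c := by
  unfold Xmat
  rw [map_neg, mul_neg, stdBasisMatrix_neg', stdBasisMatrix_neg']
  abel

/-- The elementary short root unipotent `T_{ij}(c)`, for `i ≠ ±j`
(with junk value `1` when `i = j`). -/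
def TS (D : FormRingData A) (i j : Idx n) (c : A) : GLn A n :=
  if h : i = j then 1 else
    { val := 1 + D.Xmat i j c
      inv := 1 + D.Xmat i j (-c)
      val_inv := by
        rw [D.Xmat_neg, ← sub_eq_add_neg]
        exact one_add_mul_one_sub (D.Xmat_mul h c c)
      inv_val := by
        rw [D.Xmat_neg, ← sub_eq_add_neg]
        exact one_sub_mul_one_add (D.Xmat_mul h c c) }

/-- The elementary long root unipotent `T_{i,−i}(c)`. -/
def TL (D : FormRingData A) (i : Idx n) (c : A) : GLn A n where
  val := 1 + Matrix.single i (Idx.neg i) c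
  inv := 1 + Matrix.single i (Idx.neg i) (-c)
  val_inv := by
    rw [stdBasisMatrix_neg', ← sub_eq_add_neg]
    exact one_add_mul_one_sub (Matrix.single_mul_single_of_ne _ _ _ _ (Idx.neg_ne i) _)
  inv_val := by
    rw [stdBasisMatrix_neg', ← sub_eq_add_neg]
    exact one_sub_mul_one_add (Matrix.single_mul_single_of_ne _ _ _ _ (Idx.neg_ne i) _)

/-- The elementary unitary transvection `T_{ij}(c)` (long or short root type
according to whether `j = −i`). -/
def T (D : FormRingData A) (i j : Idx n) (c : A) : GLn A n :=
  if j = Idx.neg i then D.TL i c else D.TS i j c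

/-- The elementary commutator `Y_{ij}(a,b) = [T_{ij}(a), T_{ji}(b)]`. -/
def Y (D : FormRingData A) (i j : Idx n) (a b : A) : GLn A n :=
  ⁅D.T i j a, D.T j i b⁆

/-- The elementary conjugate `Z_{ij}(a,c) = T_{ji}(c) T_{ij}(a) T_{ji}(−c)`. -/
def Z (D : FormRingData A) (i j : Idx n) (a c : A) : GLn A n :=
  D.T j i c * D.T i j a * D.T j i (-c)

/-- The set of elementary unitary transvections of level `(I,Γ)`. -/
def transvGen (D : FormRingData A) (n : ℕ) (I Γ : AddSubgroup A) : Set (GLn A n) :=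
  {x | ∃ i j : Idx n, i ≠ j ∧ i ≠ Idx.neg j ∧ ∃ c ∈ I, x = D.TS i j c} ∪
    {x | ∃ i : Idx n, ∃ g ∈ Γ, x = D.TL i (D.lpow (-(Idx.eps i + 1) / 2) * g)}

/-- The unrelative elementary subgroup `FU(2n, I, Γ)`. -/
def FU (D : FormRingData A) (n : ℕ) (I Γ : AddSubgroup A) : Subgroup (GLn A n) :=
  Subgroup.closure (D.transvGen n I Γ)

/-- The absolute elementary unitary group `EU(2n, A, Λ)`. -/
def EUmax (D : FormRingData A) (n : ℕ) : Subgroup (GLn A n) :=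
  D.FU n ⊤ D.Lambda

/-- The relative elementary subgroup `EU(2n, I, Γ)`: the normal closure of
`FU(2n, I, Γ)` in `EU(2n, A, Λ)`. -/
def EU (D : FormRingData A) (n : ℕ) (I Γ : AddSubgroup A) : Subgroup (GLn A n) :=
  Subgroup.closure {x | ∃ g ∈ D.EUmax n, ∃ t ∈ D.transvGen n I Γ, x = g * t * g⁻¹}

/-- The additive subgroup generated by products `st`, `s ∈ S`, `t ∈ T`. -/
def mulSub (S T : AddSubgroup A) : AddSubgroup A :=
  AddSubgroup.closure {x | ∃ a ∈ S, ∃ b ∈ T, x = a * b}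

/-- The symmetrised product `ST + TS` of two (additive subgroups underlying)
two-sided ideals. -/
def symI (S T : AddSubgroup A) : AddSubgroup A :=
  mulSub S T ⊔ mulSub T S

/-- The minimal relative form parameter `Γ_min(K)` of level `K`. -/
def gammaMin (D : FormRingData A) (K : AddSubgroup A) : AddSubgroup A :=
  AddSubgroup.closure
    ({x | ∃ a ∈ K, x = a - D.lam * D.bar a} ∪
      {x | ∃ a ∈ K, ∃ c ∈ D.Lambda, x = a * c * D.bar a})

/-- The relative form parameter `ˢΓ = ⟨ b γ b̄ ∣ b ∈ S, γ ∈ Γ ⟩`. -/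
def conjPar (D : FormRingData A) (S Γ : AddSubgroup A) : AddSubgroup A :=
  AddSubgroup.closure {x | ∃ b ∈ S, ∃ g ∈ Γ, x = b * g * D.bar b}

/-- The relative form parameter of the symmetrised product
`(I,Γ)∘(J,Δ) = (IJ+JI, Γ_min(IJ+JI) + ᴶΓ + ᴵΔ)`. -/
def symG (D : FormRingData A) (I Γ J Δ : AddSubgroup A) : AddSubgroup A :=
  D.gammaMin (symI I J) ⊔ D.conjPar J Γ ⊔ D.conjPar I Δ

/-- The elementary subgroup `EU(2n, (I,Γ)∘(J,Δ))` of the symmetrised product. -/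
def EUsym (D : FormRingData A) (n : ℕ) (I Γ J Δ : AddSubgroup A) : Subgroup (GLn A n) :=
  D.EU n (symI I J) (D.symG I Γ J Δ)

/-- Position-dependent membership `a ∈ (I,Γ)` at position `(i,j)`:
`a ∈ I` for a short root position, `a ∈ λ^{−(ε(i)+1)/2}Γ` for a long one. -/
def pmem (D : FormRingData A) (I Γ : AddSubgroup A) {n : ℕ} (i j : Idx n) (a : A) : Prop :=
  if j = Idx.neg i then ∃ g ∈ Γ, a = D.lpow (-(Idx.eps i + 1) / 2) * g else a ∈ I

end FormRingData

/-- A form ideal `(I,Γ)` of the form ring `(A,Λ)`. -/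
structure FormIdeal {A : Type*} [Ring A] (D : FormRingData A) where
  I : AddSubgroup A
  Gamma : AddSubgroup A
  mul_mem_left : ∀ (c : A), ∀ x ∈ I, c * x ∈ I
  mul_mem_right : ∀ (c : A), ∀ x ∈ I, x * c ∈ I
  bar_mem : ∀ x ∈ I, D.bar x ∈ I
  gammaMin_le : D.gammaMin I ≤ Gamma
  gamma_le_I : Gamma ≤ I
  gamma_le_Lambda : Gamma ≤ D.Lambda
  gamma_conj : ∀ (c : A), ∀ x ∈ Gamma, c * x * D.bar c ∈ Gamma

/-! Commutators are computed modulo a subgroup `N`: the elements which normalize `N` and commute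
with a subgroup `S` modulo `N` form a subgroup, so commutator inclusions may be checked on
generators, and the three subgroup lemma holds modulo `N`.

A weight `f` for which the root `α` has weight `0` and an independent root `β` has positive weight
puts `X_{±α}` into a parabolic subgroup and `X_β` into its unipotent radical; hence conjugation by
`⟨X_α, X_{-α}⟩` keeps `X_β(K)` inside `FU(K)`. For `n ≥ 3` every root subgroup `X_α(K ∘ L)` lies in
the subgroup generated by the `[X_β(K), X_γ(L)]` with `β` and `γ` independent of `α`. As `EU(K ∘ L)`
is generated by the conjugates of the `X_α(K ∘ L)` under `⟨X_α, X_{-α}⟩`, it is contained in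
`[FU(K), FU(L)]`. Conversely `[FU(K), FU(L)]` is central in `EU(A, Λ)` modulo `EU(K ∘ L)`: only the
commutators `[X_α(K), X_{-α}(L)]` are not already in `FU(K ∘ L)`, and those are treated by the three
subgroup lemma, because `EU(A, Λ)` is generated by the `X_β` with `β` independent of `α`.
So `[FU(K), FU(L)]` is normal, and the three subgroup lemma once more allows `FU` to be replaced by
`EU`. -/

section Groups

variable {G : Type*} [Group G]

/-- The closure of `S` under conjugation by `H`: the subgroup generated by the conjugates `h s h⁻¹`
with `h ∈ H` and `s ∈ S`. -/
def conjClosure (H : Subgroup G) (S : Set G) : Subgroup G :=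
  Subgroup.closure {x | ∃ h ∈ H, ∃ s ∈ S, x = h * s * h⁻¹}

section conjClosure

variable {H N : Subgroup G} {S : Set G}

theorem conjClosure_le_iff : conjClosure H S ≤ N ↔ ∀ h ∈ H, ∀ s ∈ S, h * s * h⁻¹ ∈ N := by
  rw [conjClosure, Subgroup.closure_le]
  exact ⟨fun hle h hh s hs ↦ hle ⟨h, hh, s, hs, rfl⟩,
    fun hle _ ⟨h, hh, s, hs, hx⟩ ↦ hx ▸ hle h hh s hs⟩

theorem subset_conjClosure : S ⊆ conjClosure H S := fun s hs ↦ by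
  simpa using conjClosure_le_iff.1 le_rfl 1 (one_mem H) s hs

theorem le_normalizer_conjClosure : H ≤ Subgroup.normalizer (conjClosure H S : Set G) := by
  refine Subgroup.le_normalizer_closure_iff.2 ?_
  rintro g hg _ ⟨h, hh, s, hs, rfl⟩
  refine Subgroup.subset_closure ⟨g * h, mul_mem hg hh, s, hs, ?_⟩
  group

theorem conjClosure_le (hS : S ⊆ N) (hH : H ≤ Subgroup.normalizer (N : Set G)) :
    conjClosure H S ≤ N :=
  conjClosure_le_iff.2 fun h hh _ hs ↦ Subgroup.le_normalizer_iff.1 hH h hh _ (hS hs)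

end conjClosure

/-- The centralizer of `S` modulo `N`: the elements which normalize `N` and whose commutators with
the elements of `S` lie in `N`. -/
def centralizerMod (N S : Subgroup G) : Subgroup G where
  carrier := {g | g ∈ Subgroup.normalizer (N : Set G) ∧ ∀ s ∈ S, ⁅g, s⁆ ∈ N}
  one_mem' := ⟨one_mem _, fun s _ ↦ by rw [commutatorElement_one_left]; exact one_mem N⟩
  mul_mem' {g h} hg hh := ⟨mul_mem hg.1 hh.1, fun s hs ↦ by
    rw [commutatorElement_mul_left_eq_conj_mul]
    exact mul_mem ((Subgroup.mem_normalizer_iff.1 hg.1 _).1 (hh.2 s hs)) (hg.2 s hs)⟩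
  inv_mem' {g} hg := ⟨inv_mem hg.1, fun s hs ↦ by
    rw [commutatorElement_inv_left]
    refine (Subgroup.mem_normalizer_iff''.1 hg.1 _).1 ?_
    rw [← commutatorElement_inv]
    exact inv_mem (hg.2 s hs)⟩

variable {N S H H₁ H₂ H₃ : Subgroup G}

theorem le_centralizerMod_iff :
    H ≤ centralizerMod N S ↔ H ≤ Subgroup.normalizer (N : Set G) ∧ ⁅H, S⁆ ≤ N := by
  rw [Subgroup.commutator_le]
  exact forall₂_and

theorem le_normalizer_centralizerMod (hN : H ≤ Subgroup.normalizer (N : Set G))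
    (hS : H ≤ Subgroup.normalizer (S : Set G)) :
    H ≤ Subgroup.normalizer (centralizerMod N S : Set G) := by
  refine Subgroup.le_normalizer_iff.2 fun h hh g hg ↦
    ⟨mul_mem (mul_mem (hN hh) hg.1) (inv_mem (hN hh)), fun s hs ↦ ?_⟩
  have hs' : h⁻¹ * s * h ∈ S := (Subgroup.mem_normalizer_iff''.1 (hS hh) s).1 hs
  have key := (Subgroup.mem_normalizer_iff.1 (hN hh) _).1 (hg.2 _ hs')
  rw [conjugate_commutatorElement] at key
  convert key using 2
  group

theorem commutator_commutator_le_of_rotate (h₁ : H₁ ≤ Subgroup.normalizer (N : Set G))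
    (h₂ : H₂ ≤ Subgroup.normalizer (N : Set G)) (h₃ : H₃ ≤ Subgroup.normalizer (N : Set G))
    (h₂₃₁ : ⁅⁅H₂, H₃⁆, H₁⁆ ≤ N) (h₃₁₂ : ⁅⁅H₃, H₁⁆, H₂⁆ ≤ N) : ⁅⁅H₁, H₂⁆, H₃⁆ ≤ N := by
  suffices ⁅H₁, H₂⁆ ≤ centralizerMod N H₃ from (le_centralizerMod_iff.1 this).2
  refine Subgroup.commutator_le.2 fun a ha b hb ↦ ⟨?_, fun c hc ↦ ?_⟩
  · exact Subgroup.commutator_le.1 (Subgroup.commutator_le_self _) a (h₁ ha) b (h₂ hb)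
  · have conj_mem {g x : G} (hg : g ∈ Subgroup.normalizer (N : Set G)) (hx : x ∈ N) :
        g * x * g⁻¹ ∈ N := (Subgroup.mem_normalizer_iff.1 hg x).1 hx
    have hc' := conj_mem (h₃ hc) (h₃₁₂ (Subgroup.commutator_mem_commutator
      (Subgroup.commutator_mem_commutator (inv_mem hc) (inv_mem ha)) hb))
    have hb' := conj_mem (h₂ hb) (h₂₃₁ (Subgroup.commutator_mem_commutator
      (Subgroup.commutator_mem_commutator (inv_mem hb) hc) (inv_mem ha)))
    have hallWitt : ⁅⁅a, b⁆, c⁆ = a * ((c * ⁅⁅c⁻¹, a⁻¹⁆, b⁆ * c⁻¹) *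
        (b * ⁅⁅b⁻¹, c⁆, a⁻¹⁆ * b⁻¹))⁻¹ * a⁻¹ := by
      simp only [commutatorElement_def]
      group
    rw [hallWitt]
    exact conj_mem (h₁ ha) (inv_mem (mul_mem hc' hb'))

end Groups

theorem commutatorElement_eq_of_mul_eq {G : Type*} [Group G] {x y z : G}
    (h : x * y = z * (y * x)) : ⁅x, y⁆ = z := by
  rw [commutatorElement_def, mul_assoc, ← _root_.mul_inv_rev, h, mul_inv_cancel_right]

theorem commutatorElement_eq_of_mul_self_eq_zero {R : Type*} [Ring R] {x y z : Rˣ} {X Y : R}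
    (hx : (x : R) = 1 + X) (hy : (y : R) = 1 + Y) (hXX : X * X = 0) (hYY : Y * Y = 0)
    (hXYX : X * Y * X = 0) (hz : (z : R) = 1 + (X * Y - Y * X + Y * X * Y)) : ⁅x, y⁆ = z := by
  refine commutatorElement_eq_of_mul_eq (Units.ext ?_)
  have expand : (1 + (X * Y - Y * X + Y * X * Y)) * ((1 + Y) * (1 + X)) =
      (1 + X) * (1 + Y) + X * Y * X + X * (Y * Y) * (1 + X) - Y * (X * X) + Y * X * (Y * Y) +
        Y * X * (Y * Y) * X := by
    noncomm_ring
  simp only [Units.val_mul, hx, hy, hz, expand, hXX, hYY, hXYX]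
  simp

namespace Idx

variable {n : ℕ}

theorem neg_eq_iff {i j : Idx n} : neg i = j ↔ i = neg j :=
  ⟨fun h => h ▸ (neg_neg i).symm, fun h => h ▸ neg_neg j⟩

theorem ne_neg_comm {i j : Idx n} : i ≠ neg j ↔ j ≠ neg i :=
  not_congr (eq_comm.trans neg_eq_iff)

theorem neg_ne_iff {i j : Idx n} : neg i ≠ j ↔ i ≠ neg j :=
  not_congr neg_eq_iff

theorem eps_neg (i : Idx n) : (neg i).eps = -i.eps := by
  rcases i with ⟨_, _ | _⟩ <;> rfl

/-- The number `(ε(i) + 1) / 2`, in terms of which all exponents of `λ` are affine. -/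
def half (i : Idx n) : ℤ := if i.2 then 1 else 0

theorem half_neg (i : Idx n) : (neg i).half = 1 - i.half := by
  rcases i with ⟨_, _ | _⟩ <;> rfl

end Idx

namespace FormRingData

variable {A : Type*} [Ring A] {n : ℕ} (D : FormRingData A)

theorem bar_one : D.bar 1 = 1 := by
  simpa only [one_mul, D.bar_bar] using (D.bar_mul 1 (D.bar 1)).symm

/-- The symmetry `λ` as a unit, with inverse `λ̄`. -/
def lamUnit : Aˣ :=
  ⟨D.lam, D.bar D.lam, D.lam_bar, (D.lam_comm _).symm.trans D.lam_bar⟩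

theorem lpow_eq_zpow (k : ℤ) : D.lpow k = ((D.lamUnit ^ k : Aˣ) : A) := by
  unfold lpow
  split_ifs with hk
  · lift k to ℕ using hk
    simp [lamUnit]
  · obtain ⟨m, rfl⟩ : ∃ m : ℕ, k = -m := ⟨(-k).toNat, by omega⟩
    simp [lamUnit, ← inv_pow]

theorem lpow_add (k l : ℤ) : D.lpow (k + l) = D.lpow k * D.lpow l := by
  simp only [lpow_eq_zpow, _root_.zpow_add, Units.val_mul]

theorem lpow_mul_comm (k : ℤ) (a : A) : D.lpow k * a = a * D.lpow k := by
  have h : Commute a D.lamUnit := (D.lam_comm a).symm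
  simpa only [lpow_eq_zpow] using (h.units_zpow_right k).symm.eq

theorem bar_pow (a : A) (m : ℕ) : D.bar (a ^ m) = D.bar a ^ m := by
  induction m with
  | zero => simp only [pow_zero, D.bar_one]
  | succ m ih => rw [pow_succ', D.bar_mul, ih, pow_succ]

theorem bar_lpow (k : ℤ) : D.bar (D.lpow k) = D.lpow (-k) := by
  rcases lt_trichotomy k 0 with hk | rfl | hk
  · rw [lpow, lpow, if_neg hk.not_ge, if_pos (by omega), D.bar_pow, D.bar_bar]
  · simp [lpow, D.bar_one]
  · rw [lpow, lpow, if_pos hk.le, if_neg (by omega), D.bar_pow, neg_neg]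

theorem lpow_zero : D.lpow 0 = 1 := by
  simp [lpow]

theorem lpow_one : D.lpow 1 = D.lam := by
  simp [lpow]

theorem lpow_lpow_mul (k l : ℤ) (a : A) : D.lpow k * (D.lpow l * a) = D.lpow (k + l) * a := by
  rw [D.lpow_add, mul_assoc]

/-- The scalar `λ^{-(ε(i)+1)/2}` at the long root position `(i, -i)`. -/
def longUnit (i : Idx n) : A := D.lpow (-(i.eps + 1) / 2)

theorem longUnit_eq (i : Idx n) : D.longUnit i = D.lpow (-i.half) := by
  rcases i with ⟨_, _ | _⟩ <;> rfl

theorem longUnit_mul_lpow_half_mul (i : Idx n) (c : A) :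
    D.longUnit i * (D.lpow i.half * c) = c := by
  rw [longUnit_eq, lpow_lpow_mul, neg_add_cancel, lpow_zero, one_mul]

/-- The entry `λ^{(ε(j)-ε(i))/2} c̄` which `T_ij(c)` has, up to sign, at position `(-j, -i)`. -/
def dual (i j : Idx n) : A →+ A :=
  (AddMonoidHom.mulLeft (D.lpow ((j.eps - i.eps) / 2))).comp D.bar

theorem dual_apply (i j : Idx n) (c : A) :
    D.dual i j c = D.lpow (j.half - i.half) * D.bar c := by
  rcases i with ⟨_, _ | _⟩ <;> rcases j with ⟨_, _ | _⟩ <;> rfl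

theorem dual_dual (i j : Idx n) (c : A) : D.dual j.neg i.neg (D.dual i j c) = c := by
  rw [dual_apply, dual_apply, D.bar_mul, D.bar_lpow, D.bar_bar, ← lpow_mul_comm, lpow_lpow_mul,
    i.half_neg, j.half_neg, show 1 - i.half - (1 - j.half) + -(j.half - i.half) = 0 by ring,
    lpow_zero, one_mul]

theorem dual_mul (i j l : Idx n) (a b : A) :
    D.dual i l (a * b) = D.dual j l b * D.dual i j a := by
  simp only [dual_apply, D.bar_mul]
  rw [mul_assoc, ← mul_assoc (D.bar b), ← D.lpow_mul_comm _ (D.bar b), mul_assoc, lpow_lpow_mul]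
  ring_nf

theorem dual_longUnit_mul (i : Idx n) (c : A) :
    D.dual i i.neg (D.longUnit i * c) = D.longUnit i * (D.lam * D.bar c) := by
  rw [dual_apply, longUnit_eq, D.bar_mul, D.bar_lpow, ← D.lpow_mul_comm, ← D.lpow_one,
    lpow_lpow_mul, lpow_lpow_mul, i.half_neg]
  ring_nf

theorem sub_dual_eq (i : Idx n) (c : A) :
    c - D.dual i i.neg c =
      D.longUnit i * (D.lpow i.half * c - D.lam * D.bar (D.lpow i.half * c)) := by
  rw [mul_sub, ← dual_longUnit_mul, longUnit_mul_lpow_half_mul]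

theorem dual_longUnit_mul_of_mem {g : A} (hg : g ∈ D.Lambda) (i : Idx n) :
    D.dual i i.neg (D.longUnit i * g) = -(D.longUnit i * g) := by
  rw [dual_longUnit_mul, ← neg_eq_iff_eq_neg.2 (D.lambdaMax_mem g hg), mul_neg]

theorem dual_mul_longUnit_mul_mul (i l : Idx n) (b g : A) :
    D.dual i.neg l b * (D.longUnit i * g) * b = D.longUnit l.neg * (D.bar b * g * b) := by
  rw [dual_apply, longUnit_eq, longUnit_eq, i.half_neg, l.half_neg, mul_assoc (D.lpow _),
    ← mul_assoc (D.bar b), ← D.lpow_mul_comm _ (D.bar b), mul_assoc (D.lpow _) (D.bar b),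
    lpow_lpow_mul, mul_assoc]
  ring_nf

/-- The part `T_ij(c) - e` of an elementary transvection, at short and long positions alike. -/
def rootMatrix (i j : Idx n) (c : A) : Matrix (Idx n) (Idx n) A :=
  if j = i.neg then single i j c else D.Xmat i j c

variable {i j k l : Idx n}

theorem rootMatrix_long (i : Idx n) (c : A) : D.rootMatrix i i.neg c = single i i.neg c :=
  if_pos rfl

theorem rootMatrix_short (h : j ≠ i.neg) (c : A) :
    D.rootMatrix i j c = single i j c - single j.neg i.neg (D.dual i j c) :=
  if_neg h

theorem T_self (i : Idx n) (c : A) : D.T i i c = 1 := by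
  rw [T, if_neg (Idx.neg_ne i).symm, TS, dif_pos rfl]

theorem T_val (h : i ≠ j) (c : A) :
    (D.T i j c : Matrix (Idx n) (Idx n) A) = 1 + D.rootMatrix i j c := by
  rw [T, rootMatrix]
  split_ifs with hj
  · rw [hj]
    rfl
  · rw [TS, dif_neg h]

theorem single_mul_rootMatrix (i j l : Idx n) (a b : A) :
    single i j a * D.rootMatrix j l b = single i l (a * b) := by
  obtain rfl | hl := eq_or_ne l j.neg
  · rw [rootMatrix_long, single_mul_single_same]
  · have hjl : j ≠ l.neg := fun h ↦ hl (Idx.neg_eq_iff.1 h.symm)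
    rw [D.rootMatrix_short hl, mul_sub, single_mul_single_same, single_mul_single_of_ne _ _ _ _ hjl,
      sub_zero]

theorem single_mul_rootMatrix_eq_zero (h : j ≠ k) (h' : j ≠ l.neg) (i : Idx n) (a b : A) :
    single i j a * D.rootMatrix k l b = 0 := by
  unfold rootMatrix Xmat
  split_ifs <;>
    simp only [mul_sub, single_mul_single_of_ne, h, h', ne_eq, not_false_eq_true, sub_zero]

theorem rootMatrix_mul_rootMatrix (hij : j ≠ i.neg) (hil : i ≠ l) (a b : A) :
    D.rootMatrix i j a * D.rootMatrix j l b = single i l (a * b) := by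
  rw [D.rootMatrix_short hij, sub_mul, single_mul_rootMatrix,
    single_mul_rootMatrix_eq_zero _ hij.symm (Idx.neg_injective.ne hil), sub_zero]

theorem rootMatrix_mul_rootMatrix_eq_zero (h₁ : j ≠ k) (h₂ : j ≠ l.neg) (h₃ : i ≠ k.neg)
    (h₄ : i ≠ l) (a b : A) : D.rootMatrix i j a * D.rootMatrix k l b = 0 := by
  obtain rfl | hj := eq_or_ne j i.neg
  · rw [rootMatrix_long, D.single_mul_rootMatrix_eq_zero h₁ h₂]
  · rw [D.rootMatrix_short hj, sub_mul, D.single_mul_rootMatrix_eq_zero h₁ h₂,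
      D.single_mul_rootMatrix_eq_zero (Idx.neg_ne_iff.2 h₃) (Idx.neg_injective.ne h₄), sub_zero]

theorem rootMatrix_mul_self (h : i ≠ j) (a b : A) :
    D.rootMatrix i j a * D.rootMatrix i j b = 0 :=
  D.rootMatrix_mul_rootMatrix_eq_zero h.symm (Idx.neg_ne j).symm (Idx.neg_ne i).symm h a b

theorem rootMatrix_add (i j : Idx n) (a b : A) :
    D.rootMatrix i j (a + b) = D.rootMatrix i j a + D.rootMatrix i j b := by
  unfold rootMatrix Xmat
  split_ifs
  · exact single_add i j a b
  · rw [map_add, mul_add, single_add, single_add]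
    abel

theorem rootMatrix_flip (h : j ≠ i.neg) (c : A) :
    D.rootMatrix j.neg i.neg (-D.dual i j c) = D.rootMatrix i j c := by
  rw [D.rootMatrix_short h, D.rootMatrix_short (by grind [Idx.neg_neg]), map_neg, dual_dual,
    Idx.neg_neg, Idx.neg_neg, stdBasisMatrix_neg', stdBasisMatrix_neg']
  abel

theorem T_add (i j : Idx n) (a b : A) : D.T i j (a + b) = D.T i j a * D.T i j b := by
  obtain rfl | h := eq_or_ne i j
  · simp only [T_self, mul_one]
  · apply Units.ext
    rw [Units.val_mul, T_val _ h, T_val _ h, T_val _ h, rootMatrix_add, mul_add, add_mul, add_mul,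
      rootMatrix_mul_self _ h]
    simp only [one_mul, mul_one, add_zero]
    abel

theorem T_flip (h : j ≠ i.neg) (c : A) : D.T j.neg i.neg (-D.dual i j c) = D.T i j c := by
  obtain rfl | hij := eq_or_ne i j
  · simp only [T_self]
  · apply Units.ext
    rw [D.T_val hij, D.T_val (Idx.neg_injective.ne hij.symm), D.rootMatrix_flip h]

theorem commutator_T_T_of_rootMatrix (hij : i ≠ j) (hkl : k ≠ l) {a b : A} {z : GLn A n}
    (hXYX : D.rootMatrix i j a * D.rootMatrix k l b * D.rootMatrix i j a = 0)
    (hz : (z : Matrix (Idx n) (Idx n) A) = 1 + (D.rootMatrix i j a * D.rootMatrix k l b -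
      D.rootMatrix k l b * D.rootMatrix i j a +
      D.rootMatrix k l b * D.rootMatrix i j a * D.rootMatrix k l b)) :
    ⁅D.T i j a, D.T k l b⁆ = z :=
  commutatorElement_eq_of_mul_self_eq_zero (D.T_val hij a) (D.T_val hkl b)
    (D.rootMatrix_mul_self hij a a) (D.rootMatrix_mul_self hkl b b) hXYX hz

theorem commutator_T_T_eq_one (h₁ : j ≠ k) (h₂ : j ≠ l.neg) (h₃ : i ≠ k.neg) (h₄ : i ≠ l)
    (a b : A) : ⁅D.T i j a, D.T k l b⁆ = 1 := by
  obtain rfl | hij := eq_or_ne i j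
  · rw [T_self, commutatorElement_one_left]
  obtain rfl | hkl := eq_or_ne k l
  · rw [T_self, commutatorElement_one_right]
  have hXY := D.rootMatrix_mul_rootMatrix_eq_zero h₁ h₂ h₃ h₄ a b
  have hYX := D.rootMatrix_mul_rootMatrix_eq_zero h₄.symm (Idx.ne_neg_comm.1 h₂)
    (Idx.ne_neg_comm.1 h₃) h₁.symm b a
  exact D.commutator_T_T_of_rootMatrix hij hkl (by rw [hXY, zero_mul])
    (by rw [hXY, hYX, zero_mul, sub_zero, add_zero, add_zero, Units.val_one])

theorem commutator_T_T_eq {z : GLn A n} (hij : i ≠ j) (hij' : j ≠ i.neg) (hjl : j ≠ l)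
    (hjl' : l ≠ j.neg) (hil : i ≠ l) {a b : A}
    (hz : (z : Matrix (Idx n) (Idx n) A) =
      1 + (single i l (a * b) - single l.neg i.neg (D.dual i l (a * b)))) :
    ⁅D.T i j a, D.T j l b⁆ = z := by
  have hjl'' : j ≠ l.neg := Idx.ne_neg_comm.1 hjl'
  have hXY := D.rootMatrix_mul_rootMatrix hij' hil a b
  have hYX : D.rootMatrix j l b * D.rootMatrix i j a =
      single l.neg i.neg (D.dual i l (a * b)) := by
    rw [← D.rootMatrix_flip hij', ← D.rootMatrix_flip hjl', D.dual_mul i j l,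
      D.rootMatrix_mul_rootMatrix (Idx.neg_injective.ne hjl'') (Idx.neg_injective.ne hil.symm),
      neg_mul_neg]
  refine D.commutator_T_T_of_rootMatrix hij hjl ?_ ?_
  · rw [hXY, D.single_mul_rootMatrix_eq_zero hil.symm hjl']
  · rw [hXY, hYX, D.single_mul_rootMatrix_eq_zero hij'.symm (Idx.neg_injective.ne hil), add_zero,
      hz]

theorem commutator_T_T (hij : i ≠ j) (hij' : j ≠ i.neg) (hjl : j ≠ l) (hjl' : l ≠ j.neg)
    (hil : i ≠ l) (hil' : l ≠ i.neg) (a b : A) :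
    ⁅D.T i j a, D.T j l b⁆ = D.T i l (a * b) :=
  D.commutator_T_T_eq hij hij' hjl hjl' hil (by rw [D.T_val hil, D.rootMatrix_short hil'])

theorem commutator_T_T_neg (hij : i ≠ j) (hij' : j ≠ i.neg) (a b : A) :
    ⁅D.T i j a, D.T j i.neg b⁆ = D.T i i.neg (a * b - D.dual i i.neg (a * b)) := by
  refine D.commutator_T_T_eq hij hij' hij' (Idx.neg_injective.ne hij) (Idx.neg_ne i).symm ?_
  rw [D.T_val (Idx.neg_ne i).symm, rootMatrix_long, Idx.neg_neg, sub_eq_add_neg, single_add,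
    stdBasisMatrix_neg', sub_eq_add_neg]

theorem commutator_T_neg_T (hil : i ≠ l) (hil' : l ≠ i.neg) {c : A}
    (hc : D.dual i i.neg c = -c) (b : A) :
    ⁅D.T i i.neg c, D.T i.neg l b⁆ =
      D.T i l (c * b) * D.T l.neg l (-(D.dual i.neg l b * c * b)) := by
  have hXY : D.rootMatrix i i.neg c * D.rootMatrix i.neg l b = single i l (c * b) := by
    rw [rootMatrix_long, single_mul_rootMatrix]
  have hYX : D.rootMatrix i.neg l b * D.rootMatrix i i.neg c =
      single l.neg i.neg (-(D.dual i.neg l b * c)) := by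
    rw [← D.rootMatrix_flip (by rwa [Idx.neg_neg, ne_comm]), Idx.neg_neg,
      D.rootMatrix_mul_rootMatrix (by rwa [Idx.neg_neg]) (Idx.neg_injective.ne hil.symm), neg_mul]
  have hlong : D.rootMatrix l.neg l (-(D.dual i.neg l b * c * b)) =
      single l.neg l (-(D.dual i.neg l b * c * b)) := by
    simpa only [Idx.neg_neg] using D.rootMatrix_long l.neg (-(D.dual i.neg l b * c * b))
  refine D.commutator_T_T_of_rootMatrix (Idx.neg_ne i).symm hil'.symm ?_ ?_
  · rw [hXY, D.single_mul_rootMatrix_eq_zero hil.symm (by rwa [Idx.neg_neg, ne_comm])]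
  · have hzero := D.rootMatrix_mul_rootMatrix_eq_zero (Idx.neg_ne l).symm (Idx.neg_ne l).symm
      (by rwa [Idx.neg_neg]) hil (c * b) (-(D.dual i.neg l b * c * b))
    rw [Units.val_mul, D.T_val hil, D.T_val (Idx.neg_ne l), mul_add, add_mul, add_mul, hzero, hXY,
      hYX, hlong, D.rootMatrix_short hil', single_mul_rootMatrix, D.dual_mul i i.neg, hc, mul_neg,
      neg_mul, stdBasisMatrix_neg']
    simp only [mul_one, one_mul, add_zero]
    abel

/-- The homomorphism `c ↦ T_ij(c)`. -/
def rootHom (i j : Idx n) : Multiplicative A →* GLn A n :=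
  MonoidHom.mk' (fun c ↦ D.T i j c.toAdd) fun a b ↦ D.T_add i j a.toAdd b.toAdd

variable {P S T : AddSubgroup A}

theorem mulSub_le_iff : mulSub S T ≤ P ↔ ∀ a ∈ S, ∀ b ∈ T, a * b ∈ P := by
  rw [mulSub, AddSubgroup.closure_le]
  exact ⟨fun h a ha b hb ↦ h ⟨a, ha, b, hb, rfl⟩, fun h _ ⟨a, ha, b, hb, hx⟩ ↦ hx ▸ h a ha b hb⟩

theorem symI_le_iff : symI S T ≤ P ↔
    ∀ a ∈ S, ∀ b ∈ T, a * b ∈ P ∧ b * a ∈ P := by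
  rw [symI, sup_le_iff, mulSub_le_iff, mulSub_le_iff]
  exact ⟨fun h a ha b hb ↦ ⟨h.1 a ha b hb, h.2 b hb a ha⟩,
    fun h ↦ ⟨fun a ha b hb ↦ (h a ha b hb).1, fun b hb a ha ↦ (h a ha b hb).2⟩⟩

theorem conjPar_le_iff : D.conjPar S T ≤ P ↔ ∀ b ∈ S, ∀ g ∈ T, b * g * D.bar b ∈ P := by
  rw [conjPar, AddSubgroup.closure_le]
  exact ⟨fun h b hb g hg ↦ h ⟨b, hb, g, hg, rfl⟩, fun h _ ⟨b, hb, g, hg, hx⟩ ↦ hx ▸ h b hb g hg⟩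

theorem gammaMin_le_iff : D.gammaMin S ≤ P ↔
    (∀ a ∈ S, a - D.lam * D.bar a ∈ P) ∧ ∀ a ∈ S, ∀ c ∈ D.Lambda, a * c * D.bar a ∈ P := by
  rw [gammaMin, AddSubgroup.closure_le, Set.union_subset_iff]
  exact and_congr
    ⟨fun h a ha ↦ h ⟨a, ha, rfl⟩, fun h _ ⟨a, ha, hx⟩ ↦ hx ▸ h a ha⟩
    ⟨fun h a ha c hc ↦ h ⟨a, ha, c, hc, rfl⟩, fun h _ ⟨a, ha, c, hc, hx⟩ ↦ hx ▸ h a ha c hc⟩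

/-- The additive map `x ↦ c x c̄`. -/
def conjHom (c : A) : A →+ A := (AddMonoidHom.mulRight (D.bar c)).comp (AddMonoidHom.mulLeft c)

theorem conjHom_apply (c x : A) : D.conjHom c x = c * x * D.bar c := rfl

theorem conjHom_mul (b c x : A) : D.conjHom (b * c) x = D.conjHom b (D.conjHom c x) := by
  simp only [conjHom_apply, D.bar_mul, mul_assoc]

theorem conjHom_sub_lam_mul_bar (c x : A) :
    D.conjHom c (x - D.lam * D.bar x) = D.conjHom c x - D.lam * D.bar (D.conjHom c x) := by
  rw [map_sub]
  simp only [conjHom_apply, D.bar_mul, D.bar_bar, ← mul_assoc, D.lam_comm c]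

theorem symI_comm (S T : AddSubgroup A) : symI S T = symI T S :=
  sup_comm _ _

theorem symG_comm (I Γ J Δ : AddSubgroup A) : D.symG I Γ J Δ = D.symG J Δ I Γ := by
  rw [symG, symG, symI_comm, sup_right_comm]

end FormRingData

namespace FormIdeal

open FormRingData

variable {A : Type*} [Ring A] {D : FormRingData A} {n : ℕ}

instance : LE (FormIdeal D) where
  le K L := K.I ≤ L.I ∧ K.Gamma ≤ L.Gamma

instance : Top (FormIdeal D) where
  top :=
    { I := ⊤
      Gamma := D.Lambda
      mul_mem_left _ _ _ := AddSubgroup.mem_top _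
      mul_mem_right _ _ _ := AddSubgroup.mem_top _
      bar_mem _ _ := AddSubgroup.mem_top _
      gammaMin_le := D.gammaMin_le_iff.2
        ⟨fun a _ ↦ D.lambdaMin_mem a, fun a _ c hc ↦ D.lambda_conj a c hc⟩
      gamma_le_I := le_top
      gamma_le_Lambda := le_rfl
      gamma_conj := D.lambda_conj }

theorem le_top (K : FormIdeal D) : K ≤ ⊤ :=
  ⟨_root_.le_top, K.gamma_le_Lambda⟩

variable (K L : FormIdeal D)

theorem sub_lam_mul_bar_mem {a : A} (ha : a ∈ K.I) : a - D.lam * D.bar a ∈ K.Gamma :=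
  (D.gammaMin_le_iff.1 K.gammaMin_le).1 a ha

theorem mul_lambda_mul_bar_mem {a c : A} (ha : a ∈ K.I) (hc : c ∈ D.Lambda) :
    a * c * D.bar a ∈ K.Gamma :=
  (D.gammaMin_le_iff.1 K.gammaMin_le).2 a ha c hc

theorem symI_mul_mem_left (c : A) : ∀ x ∈ symI K.I L.I, c * x ∈ symI K.I L.I := by
  suffices symI K.I L.I ≤ (symI K.I L.I).comap (AddMonoidHom.mulLeft c) from this
  have hsym := symI_le_iff.1 (le_refl (symI K.I L.I))
  refine symI_le_iff.2 fun a ha b hb ↦ ?_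
  simp only [AddSubgroup.mem_comap, AddMonoidHom.coe_mulLeft, ← mul_assoc]
  exact ⟨(hsym _ (K.mul_mem_left c a ha) b hb).1, (hsym a ha _ (L.mul_mem_left c b hb)).2⟩

theorem symI_mul_mem_right (c : A) : ∀ x ∈ symI K.I L.I, x * c ∈ symI K.I L.I := by
  suffices symI K.I L.I ≤ (symI K.I L.I).comap (AddMonoidHom.mulRight c) from this
  have hsym := symI_le_iff.1 (le_refl (symI K.I L.I))
  refine symI_le_iff.2 fun a ha b hb ↦ ?_
  simp only [AddSubgroup.mem_comap, AddMonoidHom.mulRight_apply, mul_assoc]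
  exact ⟨(hsym a ha _ (L.mul_mem_right c b hb)).1, (hsym _ (K.mul_mem_right c a ha) b hb).2⟩

theorem symI_bar_mem : ∀ x ∈ symI K.I L.I, D.bar x ∈ symI K.I L.I := by
  suffices symI K.I L.I ≤ (symI K.I L.I).comap D.bar from this
  have hsym := symI_le_iff.1 (le_refl (symI K.I L.I))
  refine symI_le_iff.2 fun a ha b hb ↦ ?_
  simp only [AddSubgroup.mem_comap, D.bar_mul]
  exact (hsym _ (K.bar_mem a ha) _ (L.bar_mem b hb)).symm

/-- The symmetrised product `(I,Γ) ∘ (J,Δ)` of two form ideals. -/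
def sym : FormIdeal D where
  I := symI K.I L.I
  Gamma := D.symG K.I K.Gamma L.I L.Gamma
  mul_mem_left := symI_mul_mem_left K L
  mul_mem_right := symI_mul_mem_right K L
  bar_mem := symI_bar_mem K L
  gammaMin_le := le_sup_left.trans le_sup_left
  gamma_le_I := by
    have hmul := symI_le_iff.1 (le_refl (symI K.I L.I))
    refine sup_le (sup_le (D.gammaMin_le_iff.2 ⟨fun a ha ↦ ?_, fun a ha c _ ↦ ?_⟩)
      (D.conjPar_le_iff.2 fun b hb g hg ↦ ?_)) (D.conjPar_le_iff.2 fun a ha g hg ↦ ?_)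
    · exact sub_mem ha (symI_mul_mem_left K L _ _ (symI_bar_mem K L a ha))
    · exact symI_mul_mem_right K L _ _ (symI_mul_mem_right K L _ _ ha)
    · exact symI_mul_mem_right K L _ _ (hmul g (K.gamma_le_I hg) b hb).2
    · exact symI_mul_mem_right K L _ _ (hmul a ha g (L.gamma_le_I hg)).1
  gamma_le_Lambda := by
    refine sup_le (sup_le (D.gammaMin_le_iff.2 ⟨fun a _ ↦ D.lambdaMin_mem a,
      fun a _ c hc ↦ D.lambda_conj a c hc⟩) (D.conjPar_le_iff.2 fun b _ g hg ↦ ?_))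
      (D.conjPar_le_iff.2 fun a _ g hg ↦ ?_)
    · exact D.lambda_conj b g (K.gamma_le_Lambda hg)
    · exact D.lambda_conj a g (L.gamma_le_Lambda hg)
  gamma_conj c := by
    have hΓ := le_refl (D.symG K.I K.Gamma L.I L.Gamma)
    suffices D.symG K.I K.Gamma L.I L.Gamma ≤
      (D.symG K.I K.Gamma L.I L.Gamma).comap (D.conjHom c) from this
    simp only [symG, sup_le_iff, gammaMin_le_iff, conjPar_le_iff] at hΓ
    refine sup_le (sup_le (D.gammaMin_le_iff.2 ⟨fun a ha ↦ ?_, fun a ha d hd ↦ ?_⟩)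
      (D.conjPar_le_iff.2 fun b hb g hg ↦ ?_)) (D.conjPar_le_iff.2 fun a ha g hg ↦ ?_)
    · rw [AddSubgroup.mem_comap, conjHom_sub_lam_mul_bar]
      exact hΓ.1.1.1 _ (symI_mul_mem_right K L _ _ (symI_mul_mem_left K L _ _ ha))
    · rw [AddSubgroup.mem_comap, ← conjHom_apply, ← conjHom_mul]
      exact hΓ.1.1.2 _ (symI_mul_mem_left K L _ _ ha) d hd
    · rw [AddSubgroup.mem_comap, ← conjHom_apply, ← conjHom_mul]
      exact hΓ.1.2 _ (L.mul_mem_left c b hb) g hg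
    · rw [AddSubgroup.mem_comap, ← conjHom_apply, ← conjHom_mul]
      exact hΓ.2 _ (K.mul_mem_left c a ha) g hg

theorem sym_comm : K.sym L = L.sym K := by
  simp only [sym, symI_comm, symG_comm]

variable {K L} in
theorem sub_lam_mul_bar_mem_of_mem_symI {P : AddSubgroup A}
    (hmul : ∀ a ∈ K.I, ∀ b ∈ L.I, a * b - D.lam * D.bar (a * b) ∈ P) {x : A}
    (hx : x ∈ symI K.I L.I) : x - D.lam * D.bar x ∈ P := by
  let φ : A →+ A := AddMonoidHom.id A - (AddMonoidHom.mulLeft D.lam).comp D.bar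
  suffices symI K.I L.I ≤ P.comap φ from this hx
  refine symI_le_iff.2 fun a ha b hb ↦ ⟨hmul a ha b hb, ?_⟩
  have h := neg_mem
    (hmul (D.lam * D.bar a) (K.mul_mem_left _ _ (K.bar_mem a ha)) _ (L.bar_mem b hb))
  have hbar : D.lam * D.bar (D.lam * (D.bar a * D.bar b)) = b * a := by
    rw [D.bar_mul, D.bar_mul, D.bar_bar, D.bar_bar, ← mul_assoc, D.lam_comm, mul_assoc,
      D.lam_bar, mul_one]
  rw [mul_assoc, hbar, neg_sub, ← D.bar_mul] at h
  exact h

variable {K L} in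
/-- The subgroup `Γ_min` contributes only the elements `x - λ x̄` to the form parameter of a
symmetrised product: `(ab) c (ab)̄ = a (b c b̄) ā`, and `x ↦ x c x̄` is additive modulo them. -/
theorem sym_Gamma_le {P : AddSubgroup A}
    (hmul : ∀ a ∈ K.I, ∀ b ∈ L.I, a * b - D.lam * D.bar (a * b) ∈ P)
    (hK : ∀ a ∈ K.I, ∀ g ∈ L.Gamma, a * g * D.bar a ∈ P)
    (hL : ∀ b ∈ L.I, ∀ g ∈ K.Gamma, b * g * D.bar b ∈ P) : (K.sym L).Gamma ≤ P := by
  refine sup_le (sup_le (D.gammaMin_le_iff.2 ⟨fun x hx ↦ sub_lam_mul_bar_mem_of_mem_symI hmul hx,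
    fun x hx c hc ↦ ?_⟩) (D.conjPar_le_iff.2 hL)) (D.conjPar_le_iff.2 hK)
  rw [symI, mulSub, mulSub, ← AddSubgroup.closure_union] at hx
  induction hx using AddSubgroup.closure_induction with
  | mem x hx =>
    obtain ⟨a, ha, b, hb, rfl⟩ | ⟨b, hb, a, ha, rfl⟩ := hx
    · rw [← conjHom_apply, conjHom_mul]
      exact hK a ha _ (L.mul_lambda_mul_bar_mem hb hc)
    · rw [← conjHom_apply, conjHom_mul]
      exact hL b hb _ (K.mul_lambda_mul_bar_mem ha hc)
  | zero => simp
  | neg x _ hx => simpa using hx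
  | add x y hx' _ hx hy =>
    have hcross : x * c * D.bar y - D.lam * D.bar (x * c * D.bar y) ∈ P := by
      rw [AddSubgroup.closure_union, ← mulSub, ← mulSub, ← symI] at hx'
      exact sub_lam_mul_bar_mem_of_mem_symI hmul
        (symI_mul_mem_right K L _ _ (symI_mul_mem_right K L _ _ hx'))
    have hc' : D.lam * D.bar (x * c * D.bar y) = -(y * c * D.bar x) := by
      rw [D.bar_mul, D.bar_mul, D.bar_bar, ← mul_assoc, ← mul_assoc, D.lam_comm,
        mul_assoc y, ← neg_neg (D.lam * D.bar c), ← D.lambdaMax_mem c hc]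
      noncomm_ring
    rw [hc', sub_neg_eq_add] at hcross
    rw [map_add, add_mul, add_mul, mul_add, mul_add]
    convert add_mem (add_mem hx hy) hcross using 1
    abel

theorem mul_mem_sym {a b : A} (ha : a ∈ K.I) (hb : b ∈ L.I) : a * b ∈ (K.sym L).I :=
  (symI_le_iff.1 le_rfl a ha b hb).1

theorem conj_mem_sym {b g : A} (hb : b ∈ L.I) (hg : g ∈ K.Gamma) :
    b * g * D.bar b ∈ (K.sym L).Gamma :=
  AddSubgroup.mem_sup_left (AddSubgroup.mem_sup_right (D.conjPar_le_iff.1 le_rfl b hb g hg))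

theorem top_sym_le : (⊤ : FormIdeal D).sym K ≤ K :=
  ⟨symI_le_iff.2 fun a _ b hb ↦ ⟨K.mul_mem_left a b hb, K.mul_mem_right a b hb⟩,
    sym_Gamma_le (fun a _ b hb ↦ K.sub_lam_mul_bar_mem (K.mul_mem_left a b hb))
      (fun a _ g hg ↦ K.gamma_conj a g hg)
      fun _ hb _ hg ↦ K.mul_lambda_mul_bar_mem hb hg⟩

theorem sym_top_le : K.sym ⊤ ≤ K := by
  rw [sym_comm]
  exact K.top_sym_le

theorem le_sym_top : K ≤ K.sym ⊤ := by
  refine ⟨fun a ha ↦ ?_, fun g hg ↦ ?_⟩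
  · simpa only [mul_one] using K.mul_mem_sym ⊤ ha (AddSubgroup.mem_top 1)
  · simpa only [one_mul, D.bar_one, mul_one] using K.conj_mem_sym ⊤ (AddSubgroup.mem_top 1) hg

/-- The admissible arguments of `T_ij` at level `(I,Γ)`, i.e. the `a` with `a ∈ (I,Γ)` for the
position `(i, j)`. -/
def level (i j : Idx n) : AddSubgroup A :=
  if j = i.neg then K.Gamma.map (AddMonoidHom.mulLeft (D.longUnit i)) else K.I

variable {i j k l : Idx n}

theorem level_short (h : j ≠ i.neg) : K.level i j = K.I :=
  if_neg h

theorem mem_level_long {c : A} : c ∈ K.level i i.neg ↔ ∃ g ∈ K.Gamma, D.longUnit i * g = c := by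
  rw [level, if_pos rfl]
  rfl

theorem longUnit_mul_mem_level {g : A} (hg : g ∈ K.Gamma) (i : Idx n) :
    D.longUnit i * g ∈ K.level i i.neg :=
  K.mem_level_long.2 ⟨g, hg, rfl⟩

variable {K L} in
theorem level_mono (h : K ≤ L) (i j : Idx n) : K.level i j ≤ L.level i j := by
  unfold level
  split_ifs
  exacts [AddSubgroup.map_mono h.2, h.1]

/-- The root subgroup `{T_ij(a) : a ∈ (I,Γ)}`. -/
def rootSubgroup (i j : Idx n) : Subgroup (GLn A n) :=
  (AddSubgroup.toSubgroup (K.level i j)).map (D.rootHom i j)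

variable {K L}

theorem T_mem_rootSubgroup {c : A} (hc : c ∈ K.level i j) : D.T i j c ∈ K.rootSubgroup i j :=
  ⟨c, hc, rfl⟩

theorem rootSubgroup_le_iff {H : Subgroup (GLn A n)} :
    K.rootSubgroup i j ≤ H ↔ ∀ c ∈ K.level i j, D.T i j c ∈ H :=
  Subgroup.map_le_iff_le_comap

theorem rootSubgroup_mono (h : K ≤ L) (i j : Idx n) : K.rootSubgroup i j ≤ L.rootSubgroup i j :=
  rootSubgroup_le_iff.2 fun _ hc ↦ T_mem_rootSubgroup (level_mono h i j hc)

variable (K) in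
theorem rootSubgroup_self (i : Idx n) : K.rootSubgroup i i = ⊥ :=
  le_bot_iff.1 (rootSubgroup_le_iff.2 fun c _ ↦ D.T_self i c)

variable (K) in
theorem rootSubgroup_neg_neg (i j : Idx n) : K.rootSubgroup j.neg i.neg = K.rootSubgroup i j := by
  suffices ∀ i j : Idx n, K.rootSubgroup i j ≤ K.rootSubgroup j.neg i.neg from
    le_antisymm (by simpa only [Idx.neg_neg] using this j.neg i.neg) (this i j)
  intro i j
  obtain rfl | h := eq_or_ne j i.neg
  · rw [Idx.neg_neg]
  · have h' : i.neg ≠ j.neg.neg := by rwa [Idx.neg_neg, ne_comm]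
    refine rootSubgroup_le_iff.2 fun c hc ↦ D.T_flip h c ▸ T_mem_rootSubgroup ?_
    rw [K.level_short h] at hc
    rw [K.level_short h']
    exact neg_mem (K.mul_mem_left _ _ (K.bar_mem c hc))

theorem rootSubgroup_commutator_le_iff {H : Subgroup (GLn A n)} :
    ⁅K.rootSubgroup i j, L.rootSubgroup k l⁆ ≤ H ↔
      ∀ a ∈ K.level i j, ∀ b ∈ L.level k l, ⁅D.T i j a, D.T k l b⁆ ∈ H := by
  rw [Subgroup.commutator_le]
  refine ⟨fun h a ha b hb ↦ h _ (T_mem_rootSubgroup ha) _ (T_mem_rootSubgroup hb), ?_⟩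
  rintro h _ ⟨a, ha, rfl⟩ _ ⟨b, hb, rfl⟩
  exact h a ha b hb

theorem rootSubgroup_commutator_eq_bot (h₁ : j ≠ k) (h₂ : j ≠ l.neg) (h₃ : i ≠ k.neg)
    (h₄ : i ≠ l) : ⁅K.rootSubgroup i j, L.rootSubgroup k l⁆ = ⊥ :=
  le_bot_iff.1 (rootSubgroup_commutator_le_iff.2 fun a _ b _ ↦
    D.commutator_T_T_eq_one h₁ h₂ h₃ h₄ a b)

theorem rootSubgroup_commutator_le (hij : i ≠ j) (hij' : j ≠ i.neg) (hjl : j ≠ l)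
    (hjl' : l ≠ j.neg) (hil : i ≠ l) :
    ⁅K.rootSubgroup i j, L.rootSubgroup j l⁆ ≤ (K.sym L).rootSubgroup i l := by
  refine rootSubgroup_commutator_le_iff.2 fun a ha b hb ↦ ?_
  rw [K.level_short hij'] at ha
  rw [L.level_short hjl'] at hb
  have hab : a * b ∈ (K.sym L).I := K.mul_mem_sym L ha hb
  obtain rfl | hl := eq_or_ne l i.neg
  · rw [D.commutator_T_T_neg hij hij', sub_dual_eq]
    exact T_mem_rootSubgroup (longUnit_mul_mem_level _
      ((K.sym L).sub_lam_mul_bar_mem ((K.sym L).mul_mem_left _ _ hab)) i)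
  · rw [D.commutator_T_T hij hij' hjl hjl' hil hl]
    exact T_mem_rootSubgroup (((K.sym L).level_short hl).ge hab)

theorem rootSubgroup_long_commutator_le (hil : i ≠ l) (hil' : l ≠ i.neg) :
    ⁅K.rootSubgroup i i.neg, L.rootSubgroup i.neg l⁆ ≤
      (K.sym L).rootSubgroup i l ⊔ (K.sym L).rootSubgroup l.neg l := by
  refine rootSubgroup_commutator_le_iff.2 fun c hc b hb ↦ ?_
  obtain ⟨g, hg, rfl⟩ := K.mem_level_long.1 hc
  rw [L.level_short (by rwa [Idx.neg_neg, ne_comm])] at hb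
  have hbar : D.bar b * g * b ∈ (K.sym L).Gamma := by
    simpa only [D.bar_bar] using K.conj_mem_sym L (L.bar_mem b hb) hg
  have hlong : -(D.dual i.neg l b * (D.longUnit i * g) * b) ∈ (K.sym L).level l.neg l := by
    rw [D.dual_mul_longUnit_mul_mul]
    simpa only [Idx.neg_neg] using neg_mem (longUnit_mul_mem_level _ hbar l.neg)
  rw [D.commutator_T_neg_T hil hil' (D.dual_longUnit_mul_of_mem (K.gamma_le_Lambda hg) i)]
  refine Subgroup.mul_mem_sup (T_mem_rootSubgroup ?_) (T_mem_rootSubgroup hlong)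
  rw [(K.sym L).level_short hil']
  exact K.mul_mem_sym L (K.mul_mem_left _ _ (K.gamma_le_I hg)) hb

/-! ### Elementary subgroups -/

variable (K L n) in
/-- The unrelative elementary subgroup `FU(2n, I, Γ)`. -/
abbrev FU : Subgroup (GLn A n) := D.FU n K.I K.Gamma

variable (K L n) in
/-- The relative elementary subgroup `EU(2n, I, Γ)`. -/
abbrev EU : Subgroup (GLn A n) := D.EU n K.I K.Gamma

theorem FU_le_iff {H : Subgroup (GLn A n)} :
    K.FU n ≤ H ↔ ∀ i j : Idx n, i ≠ j → K.rootSubgroup i j ≤ H := by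
  rw [FU, FormRingData.FU, Subgroup.closure_le]
  constructor
  · intro h i j hij
    refine rootSubgroup_le_iff.2 fun c hc ↦ h ?_
    rw [T]
    split_ifs with hj
    · subst hj
      obtain ⟨g, hg, rfl⟩ := K.mem_level_long.1 hc
      exact Or.inr ⟨i, g, hg, rfl⟩
    · exact Or.inl ⟨i, j, hij, Idx.ne_neg_comm.1 hj, c, (K.level_short hj).le hc, rfl⟩
  · rintro h _ (⟨i, j, hij, hij', c, hc, rfl⟩ | ⟨i, g, hg, rfl⟩)
    · have hj := Idx.ne_neg_comm.1 hij'
      have hT : D.T i j c = D.TS i j c := if_neg hj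
      exact hT ▸ rootSubgroup_le_iff.1 (h i j hij) c ((K.level_short hj).ge hc)
    · have hT : D.T i i.neg (D.longUnit i * g) = D.TL i (D.longUnit i * g) := if_pos rfl
      exact hT ▸ rootSubgroup_le_iff.1 (h i i.neg (Idx.neg_ne i).symm) _
        (longUnit_mul_mem_level K hg i)

theorem rootSubgroup_le_FU (i j : Idx n) : K.rootSubgroup i j ≤ K.FU n := by
  obtain rfl | hij := eq_or_ne i j
  · exact (K.rootSubgroup_self i).trans_le bot_le
  · exact FU_le_iff.1 le_rfl i j hij

theorem FU_mono (h : K ≤ L) : K.FU n ≤ L.FU n :=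
  FU_le_iff.2 fun i j _ ↦ (rootSubgroup_mono h i j).trans (rootSubgroup_le_FU i j)

theorem FU_le_EUmax : K.FU n ≤ D.EUmax n :=
  FU_mono (L := ⊤) K.le_top

theorem rootSubgroup_le_EUmax (i j : Idx n) : K.rootSubgroup i j ≤ D.EUmax n :=
  (rootSubgroup_le_FU i j).trans FU_le_EUmax

theorem EUmax_le_normalizer_EU : D.EUmax n ≤ Subgroup.normalizer (K.EU n : Set (GLn A n)) :=
  le_normalizer_conjClosure

theorem FU_le_EU : K.FU n ≤ K.EU n :=
  (Subgroup.closure_le _).2 subset_conjClosure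

theorem EU_le {H : Subgroup (GLn A n)} (hK : K.FU n ≤ H)
    (hH : D.EUmax n ≤ Subgroup.normalizer (H : Set (GLn A n))) : K.EU n ≤ H :=
  conjClosure_le (Subgroup.subset_closure.trans hK) hH

end FormIdeal

namespace Idx

variable {n : ℕ}

/-- The value at the index `i` of the weight of `GL(2n)` with coordinates `f` on the positive
indices; the root subgroup `X_ij` has weight `weight f i - weight f j`. -/
def weight (f : Fin n → ℤ) (i : Idx n) : ℤ := i.eps * f i.1

theorem weight_neg (f : Fin n → ℤ) (i : Idx n) : weight f i.neg = -weight f i := by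
  rw [weight, weight, eps_neg, neg_mul]
  rfl

end Idx

namespace FormIdeal

open FormRingData
open Idx (weight weight_neg)

variable {A : Type*} [Ring A] {D : FormRingData A} {n : ℕ}

/-- The parabolic subgroup of level `(I,Γ)` defined by `f`, generated by the root subgroups of
nonnegative weight. -/
def parabolic (K : FormIdeal D) (f : Fin n → ℤ) : Subgroup (GLn A n) :=
  ⨆ (i : Idx n) (j : Idx n) (_ : weight f j ≤ weight f i), K.rootSubgroup i j

/-- The unipotent radical of `K.parabolic f`, generated by the root subgroups of positive
weight. -/
def unipotentRadical (K : FormIdeal D) (f : Fin n → ℤ) : Subgroup (GLn A n) :=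
  ⨆ (i : Idx n) (j : Idx n) (_ : weight f j < weight f i), K.rootSubgroup i j

variable {K L : FormIdeal D} {f : Fin n → ℤ} {H : Subgroup (GLn A n)} {i j k l : Idx n}

theorem parabolic_le_iff : K.parabolic f ≤ H ↔
    ∀ i j, weight f j ≤ weight f i → K.rootSubgroup i j ≤ H := by
  simp only [parabolic, iSup_le_iff]

theorem unipotentRadical_le_iff : K.unipotentRadical f ≤ H ↔
    ∀ i j, weight f j < weight f i → K.rootSubgroup i j ≤ H := by
  simp only [unipotentRadical, iSup_le_iff]

theorem rootSubgroup_le_parabolic (h : weight f j ≤ weight f i) :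
    K.rootSubgroup i j ≤ K.parabolic f :=
  parabolic_le_iff.1 le_rfl i j h

theorem rootSubgroup_le_unipotentRadical (h : weight f j < weight f i) :
    K.rootSubgroup i j ≤ K.unipotentRadical f :=
  unipotentRadical_le_iff.1 le_rfl i j h

theorem unipotentRadical_le_FU : K.unipotentRadical f ≤ K.FU n :=
  unipotentRadical_le_iff.2 fun i j _ ↦ rootSubgroup_le_FU i j

theorem unipotentRadical_mono (h : K ≤ L) : K.unipotentRadical f ≤ L.unipotentRadical f :=
  unipotentRadical_le_iff.2 fun i j hij ↦
    (rootSubgroup_mono h i j).trans (rootSubgroup_le_unipotentRadical hij)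

variable (K) in
theorem unipotentRadical_le_parabolic : K.unipotentRadical f ≤ K.parabolic f :=
  unipotentRadical_le_iff.2 fun _ _ hij ↦ rootSubgroup_le_parabolic hij.le

theorem rootSubgroup_commutator_chain_le (hij : weight f j ≤ weight f i)
    (hjl : weight f l ≤ weight f j) (hil : weight f l < weight f i) :
    ⁅K.rootSubgroup i j, L.rootSubgroup j l⁆ ≤ (K.sym L).unipotentRadical f := by
  obtain rfl | hne := eq_or_ne i j
  · simp only [rootSubgroup_self, Subgroup.commutator_bot_left, bot_le]
  obtain rfl | hne' := eq_or_ne j l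
  · simp only [rootSubgroup_self, Subgroup.commutator_bot_right, bot_le]
  have hil' : i ≠ l := fun h ↦ hil.ne (h ▸ rfl)
  obtain rfl | hj := eq_or_ne j i.neg
  · rw [weight_neg] at hij hjl
    refine (rootSubgroup_long_commutator_le hil' hne'.symm).trans (sup_le ?_ ?_)
    · exact rootSubgroup_le_unipotentRadical hil
    · exact rootSubgroup_le_unipotentRadical (by simp only [weight_neg]; omega)
  obtain rfl | hl := eq_or_ne l j.neg
  · rw [weight_neg] at hjl hil
    rw [Subgroup.commutator_comm, ← K.rootSubgroup_neg_neg i j, K.sym_comm]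
    refine (rootSubgroup_long_commutator_le hj
      (Idx.neg_injective.ne hne)).trans (sup_le ?_ ?_)
    · exact rootSubgroup_le_unipotentRadical (by simp only [weight_neg]; omega)
    · exact rootSubgroup_le_unipotentRadical (by simp only [weight_neg]; omega)
  · exact (rootSubgroup_commutator_le hne hj hne' hl hil').trans
      (rootSubgroup_le_unipotentRadical hil)

theorem rootSubgroup_commutator_le_unipotentRadical (hij : weight f j ≤ weight f i)
    (hkl : weight f l < weight f k) :
    ⁅K.rootSubgroup i j, L.rootSubgroup k l⁆ ≤ (K.sym L).unipotentRadical f := by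
  obtain rfl | h₁ := eq_or_ne j k
  · exact rootSubgroup_commutator_chain_le hij hkl.le (hkl.trans_le hij)
  obtain rfl | h₂ := eq_or_ne i l
  · rw [Subgroup.commutator_comm, K.sym_comm]
    exact rootSubgroup_commutator_chain_le hkl.le hij (hij.trans_lt hkl)
  have hkl' : weight f k.neg < weight f l.neg := by
    simpa only [weight_neg, neg_lt_neg_iff] using hkl
  rw [← L.rootSubgroup_neg_neg]
  obtain rfl | h₃ := eq_or_ne j l.neg
  · exact rootSubgroup_commutator_chain_le hij hkl'.le (hkl'.trans_le hij)
  obtain rfl | h₄ := eq_or_ne i k.neg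
  · rw [Subgroup.commutator_comm, K.sym_comm]
    exact rootSubgroup_commutator_chain_le hkl'.le hij (hij.trans_lt hkl')
  · rw [L.rootSubgroup_neg_neg, rootSubgroup_commutator_eq_bot h₁ h₃ h₄ h₂]
    exact bot_le

theorem rootSubgroup_commutator_self : ⁅K.rootSubgroup i j, L.rootSubgroup i j⁆ = ⊥ := by
  obtain rfl | hij := eq_or_ne i j
  · rw [rootSubgroup_self, Subgroup.commutator_bot_left]
  · exact rootSubgroup_commutator_eq_bot hij.symm (Idx.neg_ne j).symm (Idx.neg_ne i).symm hij

theorem rootSubgroup_le_normalizer_unipotentRadical (h : weight f j ≤ weight f i) :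
    K.rootSubgroup i j ≤ Subgroup.normalizer (L.unipotentRadical f : Set (GLn A n)) := by
  rw [Subgroup.le_normalizer_iff_commutator_le_right, Subgroup.commutator_comm]
  refine (le_centralizerMod_iff.1 (unipotentRadical_le_iff.2 fun k l hkl ↦
    le_centralizerMod_iff.2 ⟨?_, ?_⟩)).2
  · exact (rootSubgroup_le_unipotentRadical hkl).trans Subgroup.le_normalizer
  · rw [Subgroup.commutator_comm]
    refine (Subgroup.commutator_mono (rootSubgroup_mono K.le_top i j) le_rfl).trans ?_
    exact (rootSubgroup_commutator_le_unipotentRadical h hkl).trans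
      (unipotentRadical_mono L.top_sym_le)

theorem parabolic_le_normalizer_unipotentRadical :
    K.parabolic f ≤ Subgroup.normalizer (L.unipotentRadical f : Set (GLn A n)) :=
  parabolic_le_iff.2 fun _ _ ↦ rootSubgroup_le_normalizer_unipotentRadical

theorem parabolic_commutator_unipotentRadical_le :
    ⁅K.parabolic f, L.unipotentRadical f⁆ ≤ (K.sym L).unipotentRadical f := by
  refine (le_centralizerMod_iff.1 (parabolic_le_iff.2 fun i j hij ↦ le_centralizerMod_iff.2
    ⟨rootSubgroup_le_normalizer_unipotentRadical hij, ?_⟩)).2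
  rw [Subgroup.commutator_comm]
  refine (le_centralizerMod_iff.1 (unipotentRadical_le_iff.2 fun k l hkl ↦
    le_centralizerMod_iff.2 ⟨rootSubgroup_le_normalizer_unipotentRadical hkl.le, ?_⟩)).2
  rw [Subgroup.commutator_comm]
  exact rootSubgroup_commutator_le_unipotentRadical hij hkl

theorem parabolic_commutator_unipotentRadical_top_le :
    ⁅K.parabolic f, (⊤ : FormIdeal D).unipotentRadical f⁆ ≤ K.unipotentRadical f :=
  parabolic_commutator_unipotentRadical_le.trans (unipotentRadical_mono K.sym_top_le)

end FormIdeal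

namespace Idx

variable {n : ℕ} {i j k l : Idx n}

/-- The positions `(i, j)` and `(k, l)` give the same root, as `T_ij(c) = T_{-j,-i}(c')`. -/
def SameRoot (i j k l : Idx n) : Prop :=
  k = i ∧ l = j ∨ k = j.neg ∧ l = i.neg

/-- The position `(k, l)` is that of a root which is not proportional to the root at `(i, j)`. -/
def Independent (i j k l : Idx n) : Prop :=
  k ≠ l ∧ ¬SameRoot i j k l ∧ ¬SameRoot j i k l

theorem independent_swap : Independent j i k l ↔ Independent i j k l :=
  and_congr_right fun _ ↦ and_comm

theorem sameRoot_or_independent (hkl : k ≠ l) :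
    SameRoot i j k l ∨ SameRoot j i k l ∨ Independent i j k l := by
  unfold Independent
  tauto

theorem SameRoot.independent {k' l' : Idx n} (h : SameRoot i j k l) (h' : Independent k l k' l') :
    Independent i j k' l' := by
  obtain ⟨rfl, rfl⟩ | ⟨rfl, rfl⟩ := h
  · exact h'
  · unfold Independent SameRoot at *
    simp only [neg_neg] at h'
    tauto

theorem independent_of_fst_ne_left (hi : k.1 ≠ i.1) (hj : k.1 ≠ j.1) (hl : k ≠ l) :
    Independent i j k l := by
  refine ⟨hl, ?_, ?_⟩ <;> rintro (⟨rfl, -⟩ | ⟨rfl, -⟩) <;> exact absurd rfl ‹_›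

theorem independent_of_fst_ne_right (hi : l.1 ≠ i.1) (hj : l.1 ≠ j.1) (hk : k ≠ l) :
    Independent i j k l := by
  refine ⟨hk, ?_, ?_⟩ <;> rintro (⟨-, rfl⟩ | ⟨-, rfl⟩) <;> exact absurd rfl ‹_›

theorem exists_fst_ne (hn : 3 ≤ n) (i j : Idx n) : ∃ k : Idx n, k.1 ≠ i.1 ∧ k.1 ≠ j.1 := by
  have hcard : ({i.1, j.1} : Finset (Fin n)).card < (Finset.univ : Finset (Fin n)).card := by
    rw [Finset.card_fin]
    exact Finset.card_le_two.trans_lt hn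
  obtain ⟨m, -, hm⟩ := Finset.exists_mem_notMem_of_card_lt_card hcard
  rw [Finset.mem_insert, Finset.mem_singleton, not_or] at hm
  exact ⟨(m, true), hm⟩

/-- The coordinates of the weight which is `1` at `m`, `-1` at `-m` and `0` elsewhere. -/
def coord (m : Idx n) : Fin n → ℤ := Pi.single m.1 m.eps

theorem weight_coord (m i : Idx n) :
    weight (coord m) i = if i = m then 1 else if i = m.neg then -1 else 0 := by
  rcases i with ⟨i, _ | _⟩ <;> rcases m with ⟨m, _ | _⟩ <;>
    by_cases h : i = m <;> simp [weight, coord, eps, neg, h]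

theorem exists_weight_eq_lt (hij : i ≠ j) (h : Independent i j k l) :
    ∃ f, weight f i = weight f j ∧ weight f l < weight f k := by
  have weight_add (f g : Fin n → ℤ) (i : Idx n) : weight (f + g) i = weight f i + weight g i :=
    mul_add _ _ _
  unfold Independent SameRoot at h
  have h_neg := fun i : Idx n ↦ neg_neg i
  have h_ne := fun i : Idx n ↦ neg_ne i
  by_cases hk : k = i ∨ k = j ∨ k = i.neg ∨ k = j.neg
  · by_cases hl : l = i ∨ l = j ∨ l = i.neg ∨ l = j.neg
    -- Among the roots on `±i, ±j`, only `±2i`, `±2j` and `±(i + j)` can be independent.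
    · by_cases hk' : k = i ∨ k = j
      · refine ⟨coord i + coord j, ?_⟩
        simp only [weight_add, weight_coord]
        grind
      · refine ⟨coord i.neg + coord j.neg, ?_⟩
        simp only [weight_add, weight_coord]
        grind
    · refine ⟨coord l.neg, ?_⟩
      simp only [weight_coord]
      grind
  · refine ⟨coord k, ?_⟩
    simp only [weight_coord]
    grind

end Idx

namespace FormIdeal

open FormRingData
open Idx (SameRoot Independent weight exists_weight_eq_lt)

variable {A : Type*} [Ring A] {D : FormRingData A} {n : ℕ} {K L : FormIdeal D}
  {f : Fin n → ℤ} {H : Subgroup (GLn A n)} {i j k l : Idx n}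

theorem rootSubgroup_eq_of_sameRoot (h : SameRoot i j k l) :
    K.rootSubgroup k l = K.rootSubgroup i j := by
  obtain ⟨rfl, rfl⟩ | ⟨rfl, rfl⟩ := h
  · rfl
  · exact K.rootSubgroup_neg_neg i j

theorem rootSubgroup_commutator_le_FU (hij : i ≠ j) (hkl : k ≠ l) (h : ¬SameRoot j i k l) :
    ⁅K.rootSubgroup i j, L.rootSubgroup k l⁆ ≤ (K.sym L).FU n := by
  obtain hsame | hopp | hind := Idx.sameRoot_or_independent hkl
  · rw [rootSubgroup_eq_of_sameRoot hsame, rootSubgroup_commutator_self]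
    exact bot_le
  · exact absurd hopp h
  · obtain ⟨f, hij, hkl⟩ := exists_weight_eq_lt hij hind
    exact (rootSubgroup_commutator_le_unipotentRadical hij.ge hkl).trans unipotentRadical_le_FU

/-! ### Generation by independent roots -/

/-- The additive subgroup of all `c` with `T_ij(c) ∈ H`. -/
def rootPreimage (D : FormRingData A) (H : Subgroup (GLn A n)) (i j : Idx n) : AddSubgroup A :=
  Subgroup.toAddSubgroup' (H.comap (D.rootHom i j))

theorem mem_rootPreimage {c : A} : c ∈ rootPreimage D H i j ↔ D.T i j c ∈ H :=
  Iff.rfl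

theorem sym_rootSubgroup_le_of_short (hij : i ≠ j) (hij' : j ≠ i.neg) (hki : k.1 ≠ i.1)
    (hkj : k.1 ≠ j.1) (hKL : ⁅K.rootSubgroup i k, L.rootSubgroup k j⁆ ≤ H)
    (hLK : ⁅K.rootSubgroup k j, L.rootSubgroup i k⁆ ≤ H) : (K.sym L).rootSubgroup i j ≤ H := by
  have hik : k ≠ i.neg := ne_of_apply_ne Prod.fst hki
  have hjk : j ≠ k.neg := ne_of_apply_ne Prod.fst hkj.symm
  have hcomm := D.commutator_T_T (ne_of_apply_ne Prod.fst hki.symm) hik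
    (ne_of_apply_ne Prod.fst hkj) hjk hij hij'
  rw [Subgroup.commutator_comm] at hLK
  rw [rootSubgroup_commutator_le_iff, level_short _ hik, level_short _ hjk] at hKL hLK
  refine rootSubgroup_le_iff.2 ?_
  rw [level_short _ hij']
  refine symI_le_iff (P := rootPreimage D H i j).2 fun a ha b hb ↦ ⟨?_, ?_⟩
  · exact mem_rootPreimage.2 (hcomm a b ▸ hKL a ha b hb)
  · exact mem_rootPreimage.2 (hcomm b a ▸ hLK b hb a ha)

theorem T_mul_mul_bar_mem (hki : k.1 ≠ i.1)
    (hKL : ⁅K.rootSubgroup k k.neg, L.rootSubgroup k.neg i.neg⁆ ≤ H)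
    (hsym : (K.sym L).rootSubgroup k i.neg ≤ H) {b g : A} (hb : b ∈ L.I) (hg : g ∈ K.Gamma) :
    D.T i i.neg (D.longUnit i * (b * g * D.bar b)) ∈ H := by
  have hki' : k ≠ i.neg := ne_of_apply_ne Prod.fst hki
  have hik : i.neg ≠ k.neg := ne_of_apply_ne Prod.fst hki.symm
  have hb' : D.bar b ∈ L.level k.neg i.neg := by
    rw [L.level_short (by rwa [Idx.neg_neg, ne_comm])]
    exact L.bar_mem b hb
  have hcomm := rootSubgroup_commutator_le_iff.1 hKL _ (longUnit_mul_mem_level _ hg k) _ hb'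
  rw [D.commutator_T_neg_T hki' hik (D.dual_longUnit_mul_of_mem (K.gamma_le_Lambda hg) k),
    D.dual_mul_longUnit_mul_mul, Idx.neg_neg, D.bar_bar] at hcomm
  have hshort : D.T k i.neg (D.longUnit k * g * D.bar b) ∈ H := by
    refine rootSubgroup_le_iff.1 hsym _ (((K.sym L).level_short hik).ge ?_)
    exact K.mul_mem_sym L (K.mul_mem_left _ _ (K.gamma_le_I hg)) (L.bar_mem b hb)
  exact neg_mem_iff (H := rootPreimage D H i i.neg).1 ((H.mul_mem_cancel_left hshort).1 hcomm)

theorem sym_rootSubgroup_le_of_long (hki : k.1 ≠ i.1)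
    (hshort : ⁅K.rootSubgroup i k, L.rootSubgroup k i.neg⁆ ≤ H)
    (hKL : ⁅K.rootSubgroup k k.neg, L.rootSubgroup k.neg i.neg⁆ ≤ H)
    (hLK : ⁅L.rootSubgroup k k.neg, K.rootSubgroup k.neg i.neg⁆ ≤ H)
    (hsym : (K.sym L).rootSubgroup k i.neg ≤ H) : (K.sym L).rootSubgroup i i.neg ≤ H := by
  have hik : i ≠ k := ne_of_apply_ne Prod.fst hki.symm
  have hik' : k ≠ i.neg := ne_of_apply_ne Prod.fst hki
  have hki' : i.neg ≠ k.neg := Idx.neg_injective.ne hik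
  suffices (K.sym L).Gamma ≤
      (rootPreimage D H i i.neg).comap (AddMonoidHom.mulLeft (D.longUnit i)) by
    refine rootSubgroup_le_iff.2 fun c hc ↦ ?_
    obtain ⟨g, hg, rfl⟩ := (K.sym L).mem_level_long.1 hc
    exact this hg
  refine sym_Gamma_le (fun a ha b hb ↦ ?_) (fun a ha g hg ↦ ?_)
    fun b hb g hg ↦ T_mul_mul_bar_mem hki hKL hsym hb hg
  · rw [rootSubgroup_commutator_le_iff, level_short _ hik', level_short _ hki'] at hshort
    have hcomm := hshort _ (K.mul_mem_left (D.longUnit i) a ha) b hb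
    rw [D.commutator_T_T_neg hik hik', mul_assoc, D.dual_longUnit_mul, ← mul_sub] at hcomm
    exact hcomm
  · rw [K.sym_comm] at hsym
    exact T_mul_mul_bar_mem hki hLK hsym ha hg

theorem sym_rootSubgroup_le_of_independent (hn : 3 ≤ n) (hij : i ≠ j)
    (h : ∀ k l k' l', Independent i j k l → Independent i j k' l' →
      ⁅K.rootSubgroup k l, L.rootSubgroup k' l'⁆ ≤ H) : (K.sym L).rootSubgroup i j ≤ H := by
  obtain ⟨k, hki, hkj⟩ := Idx.exists_fst_ne hn i j
  have ind_left (l : Idx n) (hl : k ≠ l) : Independent i j k l :=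
    Idx.independent_of_fst_ne_left hki hkj hl
  have ind_right (l : Idx n) (hl : l ≠ k) : Independent i j l k :=
    Idx.independent_of_fst_ne_right hki hkj hl
  have hik : i ≠ k := ne_of_apply_ne Prod.fst hki.symm
  have hkj' : k ≠ j := ne_of_apply_ne Prod.fst hkj
  obtain rfl | hij' := eq_or_ne j i.neg
  · have ind_neg : Independent i i.neg k.neg i.neg :=
      Idx.independent_of_fst_ne_left hki hkj (Idx.neg_injective.ne hik.symm)
    have ind_long := ind_left k.neg (Idx.neg_ne k).symm
    refine sym_rootSubgroup_le_of_long hki (h _ _ _ _ (ind_right i hik) (ind_left _ hkj'))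
      (h _ _ _ _ ind_long ind_neg) ?_ ?_
    · rw [Subgroup.commutator_comm]
      exact h _ _ _ _ ind_neg ind_long
    · obtain ⟨m, hmk, hmi⟩ := Idx.exists_fst_ne hn k i
      have ind_km := ind_left m (ne_of_apply_ne Prod.fst hmk.symm)
      have ind_mi : Independent i i.neg m i.neg :=
        Idx.independent_of_fst_ne_left hmi hmi (ne_of_apply_ne Prod.fst hmi)
      exact sym_rootSubgroup_le_of_short hkj' (ne_of_apply_ne Prod.fst hki.symm) hmk hmi
        (h _ _ _ _ ind_km ind_mi) (h _ _ _ _ ind_mi ind_km)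
  · exact sym_rootSubgroup_le_of_short hij hij' hki hkj
      (h _ _ _ _ (ind_right i hik) (ind_left j hkj'))
      (h _ _ _ _ (ind_left j hkj') (ind_right i hik))

theorem rootSubgroup_le_of_independent (hn : 3 ≤ n) (hij : i ≠ j)
    (h : ∀ k l k' l', Independent i j k l → Independent i j k' l' →
      ⁅K.rootSubgroup k l, (⊤ : FormIdeal D).rootSubgroup k' l'⁆ ≤ H) : K.rootSubgroup i j ≤ H :=
  (rootSubgroup_mono K.le_sym_top i j).trans (sym_rootSubgroup_le_of_independent hn hij h)

theorem EUmax_le_of_independent (hn : 3 ≤ n) (hij : i ≠ j)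
    (h : ∀ k l, Independent i j k l → (⊤ : FormIdeal D).rootSubgroup k l ≤ H) :
    D.EUmax n ≤ H := by
  have hij_le : (⊤ : FormIdeal D).rootSubgroup i j ≤ H :=
    rootSubgroup_le_of_independent hn hij fun k l k' l' hkl hkl' ↦
      (Subgroup.commutator_mono (h k l hkl) (h k' l' hkl')).trans (Subgroup.commutator_le_self H)
  have hji_le : (⊤ : FormIdeal D).rootSubgroup j i ≤ H :=
    rootSubgroup_le_of_independent hn hij.symm fun k l k' l' hkl hkl' ↦
      (Subgroup.commutator_mono (h k l (Idx.independent_swap.1 hkl))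
        (h k' l' (Idx.independent_swap.1 hkl'))).trans (Subgroup.commutator_le_self H)
  refine FU_le_iff (K := ⊤).2 fun k l hkl ↦ ?_
  obtain hsame | hopp | hind := Idx.sameRoot_or_independent hkl
  · exact (rootSubgroup_eq_of_sameRoot hsame).trans_le hij_le
  · exact (rootSubgroup_eq_of_sameRoot hopp).trans_le hji_le
  · exact h k l hind

/-! ### Conjugation by rank one subgroups -/

/-- The elementary rank one subgroup `⟨X_α, X_{-α}⟩` for the root `α` at position `(i, j)`. -/
def rankOne (D : FormRingData A) (i j : Idx n) : Subgroup (GLn A n) :=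
  (⊤ : FormIdeal D).rootSubgroup i j ⊔ (⊤ : FormIdeal D).rootSubgroup j i

variable (K) in
/-- The closure of a root subgroup under conjugation by its rank one subgroup. It contains the
elementary conjugates `Z_ij(a, c)`. -/
def relRankOne (i j : Idx n) : Subgroup (GLn A n) :=
  conjClosure (rankOne D i j) (K.rootSubgroup i j)

theorem rootSubgroup_le_relRankOne (i j : Idx n) : K.rootSubgroup i j ≤ K.relRankOne i j :=
  subset_conjClosure

theorem rankOne_le_EUmax (i j : Idx n) : rankOne D i j ≤ D.EUmax n :=
  sup_le (rootSubgroup_le_EUmax i j) (rootSubgroup_le_EUmax j i)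

theorem rankOne_le_parabolic (h : weight f i = weight f j) :
    rankOne D i j ≤ (⊤ : FormIdeal D).parabolic f :=
  sup_le (rootSubgroup_le_parabolic h.ge) (rootSubgroup_le_parabolic h.le)

theorem relRankOne_le_EUmax (i j : Idx n) : K.relRankOne i j ≤ D.EUmax n :=
  conjClosure_le (rootSubgroup_le_EUmax i j)
    ((rankOne_le_EUmax i j).trans Subgroup.le_normalizer)

theorem relRankOne_commutator_le (h : weight f i = weight f j) :
    ⁅K.relRankOne i j, L.unipotentRadical f⁆ ≤ (K.sym L).unipotentRadical f := by
  have hrank (M : FormIdeal D) :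
      rankOne D i j ≤ Subgroup.normalizer (M.unipotentRadical f : Set (GLn A n)) :=
    (rankOne_le_parabolic h).trans parabolic_le_normalizer_unipotentRadical
  refine (le_centralizerMod_iff.1 (conjClosure_le ?_ ?_)).2
  · exact (rootSubgroup_le_parabolic h.ge).trans (le_centralizerMod_iff.2
      ⟨parabolic_le_normalizer_unipotentRadical, parabolic_commutator_unipotentRadical_le⟩)
  · exact le_normalizer_centralizerMod (hrank _) (hrank L)

theorem relRankOne_commutator_rootSubgroup_le_FU (hij : i ≠ j) (hkl : Independent i j k l) :
    ⁅K.relRankOne i j, L.rootSubgroup k l⁆ ≤ (K.sym L).FU n := by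
  obtain ⟨f, hf, hfkl⟩ := exists_weight_eq_lt hij hkl
  exact (Subgroup.commutator_mono le_rfl (rootSubgroup_le_unipotentRadical hfkl)).trans
    ((relRankOne_commutator_le hf).trans unipotentRadical_le_FU)

theorem relRankOne_commutator_top_le_FU (hij : i ≠ j) (hkl : Independent i j k l) :
    ⁅K.relRankOne i j, (⊤ : FormIdeal D).rootSubgroup k l⁆ ≤ K.FU n :=
  (relRankOne_commutator_rootSubgroup_le_FU hij hkl).trans (FU_mono K.sym_top_le)

theorem EU_le_of_relRankOne (h : ∀ i j, i ≠ j → K.relRankOne i j ≤ H) : K.EU n ≤ H := by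
  let M : Subgroup (GLn A n) := ⨆ (i) (j) (_ : i ≠ j), K.relRankOne i j
  have hM {H : Subgroup (GLn A n)} : M ≤ H ↔ ∀ i j, i ≠ j → K.relRankOne i j ≤ H := by
    simp only [M, iSup_le_iff]
  have relRankOne_le {i j : Idx n} (hij : i ≠ j) : K.relRankOne i j ≤ M := hM.1 le_rfl i j hij
  have FU_le : K.FU n ≤ M := FU_le_iff.2 fun i j hij ↦
    (rootSubgroup_le_relRankOne i j).trans (relRankOne_le hij)
  refine (EU_le FU_le (FU_le_iff (K := ⊤).2 fun k l hkl ↦ ?_)).trans (hM.2 h)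
  rw [Subgroup.le_normalizer_iff_commutator_le_left]
  refine (le_centralizerMod_iff.1 (hM.2 fun i j hij ↦ le_centralizerMod_iff.2
    ⟨(relRankOne_le hij).trans Subgroup.le_normalizer, ?_⟩)).2
  have of_le (hrank : (⊤ : FormIdeal D).rootSubgroup k l ≤ rankOne D i j) :
      ⁅K.relRankOne i j, (⊤ : FormIdeal D).rootSubgroup k l⁆ ≤ M :=
    (Subgroup.le_normalizer_iff_commutator_le_left.1 (hrank.trans le_normalizer_conjClosure)).trans
      (relRankOne_le hij)
  obtain hsame | hopp | hind := Idx.sameRoot_or_independent hkl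
  · exact of_le ((rootSubgroup_eq_of_sameRoot hsame).trans_le le_sup_left)
  · exact of_le ((rootSubgroup_eq_of_sameRoot hopp).trans_le le_sup_right)
  · exact (relRankOne_commutator_top_le_FU hij hind).trans FU_le

/-! ### The commutator of two unrelative elementary subgroups -/

theorem conj_mem_FU_of_independent (hij : i ≠ j) (hkl : Independent i j k l) {h x : GLn A n}
    (hh : h ∈ rankOne D i j) (hx : x ∈ K.rootSubgroup k l) : h * x * h⁻¹ ∈ K.FU n := by
  obtain ⟨f, hf, hfkl⟩ := exists_weight_eq_lt hij hkl
  exact unipotentRadical_le_FU (Subgroup.le_normalizer_iff.1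
    parabolic_le_normalizer_unipotentRadical h (rankOne_le_parabolic hf hh) x
    (rootSubgroup_le_unipotentRadical hfkl hx))

theorem EU_sym_le (hn : 3 ≤ n) : (K.sym L).EU n ≤ ⁅K.FU n, L.FU n⁆ := by
  refine EU_le_of_relRankOne fun i j hij ↦ conjClosure_le_iff.2 fun h hh ↦ ?_
  suffices (K.sym L).rootSubgroup i j ≤ ⁅K.FU n, L.FU n⁆.comap (MulAut.conj h).toMonoidHom from
    fun x hx ↦ this hx
  refine sym_rootSubgroup_le_of_independent hn hij fun k l k' l' hkl hkl' ↦
    Subgroup.commutator_le.2 fun x hx y hy ↦ ?_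
  rw [Subgroup.mem_comap, map_commutatorElement]
  exact Subgroup.commutator_mem_commutator (conj_mem_FU_of_independent hij hkl hh hx)
    (conj_mem_FU_of_independent hij hkl' hh hy)

theorem opposite_rootSubgroup_commutator_commutator_le (hij : i ≠ j) (hkl : Independent i j k l) :
    ⁅⁅K.rootSubgroup i j, L.rootSubgroup j i⁆, (⊤ : FormIdeal D).rootSubgroup k l⁆ ≤
      (K.sym L).FU n := by
  obtain ⟨f, hf, hfkl⟩ := exists_weight_eq_lt hij hkl
  have hij_le {M : FormIdeal D} : M.rootSubgroup i j ≤ M.parabolic f :=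
    rootSubgroup_le_parabolic hf.ge
  have hji_le {M : FormIdeal D} : M.rootSubgroup j i ≤ M.parabolic f :=
    rootSubgroup_le_parabolic hf.le
  have hkl_le : (⊤ : FormIdeal D).rootSubgroup k l ≤ (⊤ : FormIdeal D).unipotentRadical f :=
    rootSubgroup_le_unipotentRadical hfkl
  refine (commutator_commutator_le_of_rotate (N := (K.sym L).unipotentRadical f)
    (hij_le.trans parabolic_le_normalizer_unipotentRadical)
    (hji_le.trans parabolic_le_normalizer_unipotentRadical)
    ((hkl_le.trans (unipotentRadical_le_parabolic _)).trans
      parabolic_le_normalizer_unipotentRadical) ?_ ?_).trans unipotentRadical_le_FU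
  · rw [Subgroup.commutator_comm]
    exact (Subgroup.commutator_mono hij_le ((Subgroup.commutator_mono hji_le hkl_le).trans
      parabolic_commutator_unipotentRadical_top_le)).trans parabolic_commutator_unipotentRadical_le
  · rw [Subgroup.commutator_comm, K.sym_comm, Subgroup.commutator_comm (rootSubgroup _ k l)]
    exact (Subgroup.commutator_mono hji_le ((Subgroup.commutator_mono hij_le hkl_le).trans
      parabolic_commutator_unipotentRadical_top_le)).trans parabolic_commutator_unipotentRadical_le

theorem opposite_rootSubgroup_commutator_EUmax_le (hn : 3 ≤ n) (hij : i ≠ j) :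
    ⁅⁅K.rootSubgroup i j, L.rootSubgroup j i⁆, D.EUmax n⁆ ≤ (K.sym L).EU n := by
  rw [Subgroup.commutator_comm]
  refine (le_centralizerMod_iff.1 (EUmax_le_of_independent hn hij fun k l hkl ↦
    le_centralizerMod_iff.2 ⟨(rootSubgroup_le_EUmax k l).trans EUmax_le_normalizer_EU, ?_⟩)).2
  rw [Subgroup.commutator_comm]
  exact (opposite_rootSubgroup_commutator_commutator_le hij hkl).trans FU_le_EU

theorem FU_commutator_FU_le_of_rootSubgroup
    (hH : D.EUmax n ≤ Subgroup.normalizer (H : Set (GLn A n)))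
    (h : ∀ i j k l : Idx n, i ≠ j → k ≠ l → ⁅K.rootSubgroup i j, L.rootSubgroup k l⁆ ≤ H) :
    ⁅K.FU n, L.FU n⁆ ≤ H := by
  refine (le_centralizerMod_iff.1 (FU_le_iff.2 fun i j hij ↦ le_centralizerMod_iff.2
    ⟨(rootSubgroup_le_EUmax i j).trans hH, ?_⟩)).2
  rw [Subgroup.commutator_comm]
  refine (le_centralizerMod_iff.1 (FU_le_iff.2 fun k l hkl ↦ le_centralizerMod_iff.2
    ⟨(rootSubgroup_le_EUmax k l).trans hH, ?_⟩)).2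
  rw [Subgroup.commutator_comm]
  exact h i j k l hij hkl

theorem FU_commutator_commutator_EUmax_le (hn : 3 ≤ n) :
    ⁅⁅K.FU n, L.FU n⁆, D.EUmax n⁆ ≤ (K.sym L).EU n := by
  suffices ⁅K.FU n, L.FU n⁆ ≤ centralizerMod ((K.sym L).EU n) (D.EUmax n) from
    (le_centralizerMod_iff.1 this).2
  refine FU_commutator_FU_le_of_rootSubgroup
    (le_normalizer_centralizerMod EUmax_le_normalizer_EU Subgroup.le_normalizer)
    fun i j k l hij hkl ↦ le_centralizerMod_iff.2 ⟨?_, ?_⟩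
  · exact (Subgroup.commutator_mono (rootSubgroup_le_EUmax i j) (rootSubgroup_le_EUmax k l)).trans
      ((Subgroup.commutator_le_self _).trans EUmax_le_normalizer_EU)
  by_cases hopp : SameRoot j i k l
  · rw [rootSubgroup_eq_of_sameRoot hopp]
    exact opposite_rootSubgroup_commutator_EUmax_le hn hij
  · exact (Subgroup.commutator_mono ((rootSubgroup_commutator_le_FU hij hkl hopp).trans FU_le_EU)
      le_rfl).trans (Subgroup.le_normalizer_iff_commutator_le_left.1 EUmax_le_normalizer_EU)

theorem EUmax_le_normalizer_FU_commutator_FU (hn : 3 ≤ n) :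
    D.EUmax n ≤ Subgroup.normalizer (↑⁅K.FU n, L.FU n⁆ : Set (GLn A n)) :=
  Subgroup.le_normalizer_iff_commutator_le_left.2
    ((FU_commutator_commutator_EUmax_le hn).trans (EU_sym_le hn))

theorem relRankOne_commutator_rootSubgroup_le_of_independent (hn : 3 ≤ n) (hij : i ≠ j)
    (hkl : Independent i j k l) :
    ⁅K.relRankOne i j, L.rootSubgroup k l⁆ ≤ ⁅K.FU n, L.FU n⁆ :=
  (relRankOne_commutator_rootSubgroup_le_FU hij hkl).trans (FU_le_EU.trans (EU_sym_le hn))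

theorem commutator_relRankOne_le_of_independent {k' l' : Idx n} (hn : 3 ≤ n) (hij : i ≠ j)
    (hkl : Independent i j k l) (hkl' : Independent i j k' l') :
    ⁅⁅L.rootSubgroup k l, (⊤ : FormIdeal D).rootSubgroup k' l'⁆, K.relRankOne i j⁆ ≤
      ⁅K.FU n, L.FU n⁆ := by
  have hE := EUmax_le_normalizer_FU_commutator_FU (K := K) (L := L) hn
  refine commutator_commutator_le_of_rotate ((rootSubgroup_le_EUmax k l).trans hE)
    ((rootSubgroup_le_EUmax k' l').trans hE) ((relRankOne_le_EUmax i j).trans hE) ?_ ?_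
  · rw [Subgroup.commutator_comm (rootSubgroup _ k' l')]
    exact Subgroup.commutator_mono (relRankOne_commutator_top_le_FU hij hkl')
      (rootSubgroup_le_FU k l)
  · exact (Subgroup.commutator_mono
      (relRankOne_commutator_rootSubgroup_le_of_independent hn hij hkl)
      (rootSubgroup_le_EUmax k' l')).trans (Subgroup.le_normalizer_iff_commutator_le_left.1 hE)

theorem rootSubgroup_commutator_relRankOne_le (hn : 3 ≤ n) (hij : i ≠ j) (hkl : k ≠ l) :
    ⁅L.rootSubgroup k l, K.relRankOne i j⁆ ≤ ⁅K.FU n, L.FU n⁆ := by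
  have hE := EUmax_le_normalizer_FU_commutator_FU (K := K) (L := L) hn
  suffices L.rootSubgroup k l ≤ centralizerMod ⁅K.FU n, L.FU n⁆ (K.relRankOne i j) from
    (le_centralizerMod_iff.1 this).2
  have of_independent (hind : ∀ p q, Independent k l p q → Independent i j p q) :
      L.rootSubgroup k l ≤ centralizerMod ⁅K.FU n, L.FU n⁆ (K.relRankOne i j) :=
    rootSubgroup_le_of_independent hn hkl fun p q p' q' hpq hpq' ↦ le_centralizerMod_iff.2
      ⟨((Subgroup.commutator_mono (rootSubgroup_le_EUmax p q) (rootSubgroup_le_EUmax p' q')).trans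
        (Subgroup.commutator_le_self _)).trans hE,
        commutator_relRankOne_le_of_independent hn hij (hind p q hpq) (hind p' q' hpq')⟩
  obtain hsame | hopp | hind := Idx.sameRoot_or_independent hkl
  · exact of_independent fun _ _ ↦ hsame.independent
  · exact of_independent fun _ _ h ↦ Idx.independent_swap.1 (hopp.independent h)
  · refine le_centralizerMod_iff.2 ⟨(rootSubgroup_le_EUmax k l).trans hE, ?_⟩
    rw [Subgroup.commutator_comm]
    exact relRankOne_commutator_rootSubgroup_le_of_independent hn hij hind

theorem EU_commutator_FU_le (hn : 3 ≤ n) : ⁅K.EU n, L.FU n⁆ ≤ ⁅K.FU n, L.FU n⁆ := by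
  have hE := EUmax_le_normalizer_FU_commutator_FU (K := K) (L := L) hn
  refine (le_centralizerMod_iff.1 (EU_le_of_relRankOne fun i j hij ↦ le_centralizerMod_iff.2
    ⟨(relRankOne_le_EUmax i j).trans hE, ?_⟩)).2
  rw [Subgroup.commutator_comm]
  exact (le_centralizerMod_iff.1 (FU_le_iff.2 fun k l hkl ↦ le_centralizerMod_iff.2
    ⟨(rootSubgroup_le_EUmax k l).trans hE, rootSubgroup_commutator_relRankOne_le hn hij hkl⟩)).2

theorem EU_commutator_EU_le (hn : 3 ≤ n) : ⁅K.EU n, L.EU n⁆ ≤ ⁅K.FU n, L.FU n⁆ := by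
  have hE := EUmax_le_normalizer_FU_commutator_FU (K := K) (L := L) hn
  rw [Subgroup.commutator_comm]
  refine (le_centralizerMod_iff.1 (EU_le (le_centralizerMod_iff.2 ⟨FU_le_EUmax.trans hE, ?_⟩)
    (le_normalizer_centralizerMod hE EUmax_le_normalizer_EU))).2
  rw [Subgroup.commutator_comm]
  exact EU_commutator_FU_le hn

end FormIdeal

/-- Theorem 2: `[FU(2n,I,Γ), FU(2n,J,Δ)]` is normal in `EU(2n,A,Λ)` and equals
`[EU(2n,I,Γ), EU(2n,J,Δ)]`. -/
theorem statement1 {A : Type*} [Ring A] (D : FormRingData A) (n : ℕ) (hn : 3 ≤ n)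
    (FI FJ : FormIdeal D) :
    (∀ g ∈ D.EUmax n, ∀ x ∈ ⁅D.FU n FI.I FI.Gamma, D.FU n FJ.I FJ.Gamma⁆,
        g * x * g⁻¹ ∈ ⁅D.FU n FI.I FI.Gamma, D.FU n FJ.I FJ.Gamma⁆) ∧
      ⁅D.FU n FI.I FI.Gamma, D.FU n FJ.I FJ.Gamma⁆ =
        ⁅D.EU n FI.I FI.Gamma, D.EU n FJ.I FJ.Gamma⁆ := by
  have hnormal := FormIdeal.EUmax_le_normalizer_FU_commutator_FU (K := FI) (L := FJ) hn
  exact ⟨Subgroup.le_normalizer_iff.1 hnormal,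
    le_antisymm (Subgroup.commutator_mono FormIdeal.FU_le_EU FormIdeal.FU_le_EU)
      (FormIdeal.EU_commutator_EU_le hn)⟩
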